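/- arXiv:2509.21024 — 8 statements merged into one kernel-verified Lean document; each statement's English description precedes it below -/
import Mathlib

section
/- Let $c_1 \ge c_2 \ge \cdots \ge c_n > 0$ be real numbers and let $x_1, \ldots, x_n$ be real numbers with $0 \le x_i \le c_i$ for each $i \in \{1,\ldots,n\}$. If $t \le n$ is a positive integer and $x_1 + \cdots + x_n > c_1 + \cdots + c_t$, then $\sum_{k=1}^{n} x_k / c_k > t$. -/
/-!
Let `d` be the value of `c` at the last of the first `t` indices, and write `[i < t]` for the indicator
of those indices. Termwise, `x i - [i < t] * c i ≤ d * (x i / c i - [i < t])`: the difference of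
the two sides is `(d - c i) * (x i / c i - [i < t])`, whose factors are both nonpositive for
`i < t` and both nonnegative otherwise. Summing gives
`0 < ∑ x i - ∑_{i < t} c i ≤ d * (∑ x i / c i - t)`, and `d > 0`.
-/

/-- **Lemma (key lemma).** Let `c 1 ≥ c 2 ≥ ⋯ ≥ c n > 0` and `0 ≤ x i ≤ c i`.
If `t` is a positive integer with `t ≤ n` and `∑ x i > ∑_{i < t} c i`, then
`∑ x i / c i > t`. -/
theorem lym_key_lemma (n t : ℕ) (ht : 0 < t) (htn : t ≤ n)
    (c x : Fin n → ℝ) (hmono : Antitone c) (hcpos : ∀ i, 0 < c i)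
    (hx0 : ∀ i, 0 ≤ x i) (hxc : ∀ i, x i ≤ c i)
    (hsum : ∑ i, x i > ∑ i ∈ Finset.univ.filter (fun i : Fin n => (i : ℕ) < t), c i) :
    ∑ i, x i / c i > (t : ℝ) := by
  -- The `t`-th largest weight, at index `t - 1` since `Fin n` starts at `0`.
  set d : ℝ := c ⟨t - 1, by omega⟩ with hd
  have hdpos : 0 < d := hcpos _
  have key : ∀ i : Fin n, x i - (if (i : ℕ) < t then c i else 0)
      ≤ d * (x i / c i - (if (i : ℕ) < t then 1 else 0)) := by
    intro i
    have hy0 : 0 ≤ x i / c i := div_nonneg (hx0 i) (hcpos i).le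
    have hy1 : x i / c i ≤ 1 := (div_le_one (hcpos i)).2 (hxc i)
    have hxy : x i = x i / c i * c i := (div_mul_cancel₀ _ (hcpos i).ne').symm
    split_ifs with h
    · have hdc : d ≤ c i := hmono (Fin.mk_le_mk.2 (by omega) : i ≤ ⟨t - 1, by omega⟩)
      nlinarith [mul_nonneg (sub_nonneg.2 hdc) (sub_nonneg.2 hy1)]
    · have hcd : c i ≤ d := hmono (Fin.mk_le_mk.2 (by omega) : ⟨t - 1, by omega⟩ ≤ i)
      nlinarith [mul_nonneg (sub_nonneg.2 hcd) hy0]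
  have hcard : ∑ i : Fin n, (if (i : ℕ) < t then (1 : ℝ) else 0) = t := by
    rw [Finset.sum_boole, Fin.card_filter_val_lt, min_eq_right htn]
  have hle := Finset.sum_le_sum fun i (_ : i ∈ Finset.univ) => key i
  rw [← Finset.mul_sum, Finset.sum_sub_distrib, Finset.sum_sub_distrib, hcard,
    ← Finset.sum_filter] at hle
  have hpos : 0 < d * (∑ i, x i / c i - t) := lt_of_lt_of_le (sub_pos.2 hsum) hle
  exact sub_pos.1 (pos_of_mul_pos_right hpos hdpos.le)
end

section
/- Let $t_1, \ldots, t_r$ be positive integers and set $\sigma = \frac{t_1 t_2 \cdots t_r}{\max\{t_1,\ldots,t_r\}}$. Let $\mathcal{D}$ be a family of $r$-decompositions of $[n]$ such that for each $k \in \{1,\ldots,r\}$ the family $\mathcal{D}_k$ is $t_k$-chain free. Then $\sum_{(D_1,\ldots,D_r) \in \mathcal{D}} \binom{n}{|D_1|,\ldots,|D_r|}^{-1} \le \sigma$, where $\binom{n}{a_1,\ldots,a_r} = n!/(a_1!\cdots a_r!)$ is the multinomial coefficient. -/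
/-!
Permutation counting in the style of Lubell. Let `k` be an index at which `t` is maximal, and order
the indices by `s`, an injection into `ℕ` which puts `k` last. A permutation `σ` of `[n]` is
*consistent* with a decomposition `D` if, listing `[n]` in the order `σ 0, σ 1, …`, the blocks of
`D` appear as consecutive intervals in the order given by `s`. Identifying `D` with the function
`f : [n] → [r]` whose fibres are the blocks, this says that `s ∘ f ∘ σ` is monotone.

* Each `D` is consistent with at least `∏ |D i|!` permutations (`prod_factorial_le_card`), which is
  `n!` divided by the multinomial coefficient.
* Each `σ` is consistent with at most `∏_{i ≠ k} t i` members of the family (`card_consistent_le`).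
  Since the `i`-th component family is `t i`-chain free, it carries a strictly monotone rank with
  values below `t i` (`ChainFree.exists_rank`). If two members consistent with `σ` first differ in
  block `i`, then their `i`-th blocks start at the same place, so one strictly contains the other
  and their ranks differ. The last block `k` is determined by the others. Hence the
  ranks of the blocks `i ≠ k` determine the member.

Double counting the consistent pairs gives the bound `∏ t i / t k`.
-/

/-- A family `S` of elements of a partial order is `t`-chain free if it contains
no chain of `t + 1` distinct elements totally ordered (i.e. no strictly increasing
sequence of length `t + 1` inside `S`). -/
def ChainFree {α : Type*} [Preorder α] (t : ℕ) (S : Set α) : Prop :=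
  ¬ ∃ c : Fin (t + 1) → α, StrictMono c ∧ ∀ i, c i ∈ S

open Finset

/-- A `t`-chain free family has a strictly monotone rank function with values below `t`, namely
the height in the suborder it spans. -/
lemma ChainFree.exists_rank {α : Type*} [PartialOrder α] {t : ℕ} {S : Set α}
    (hS : ChainFree t S) :
    ∃ h : α → ℕ, (∀ a ∈ S, h a < t) ∧ ∀ a ∈ S, ∀ b ∈ S, a < b → h a < h b := by
  classical
  have hlen : ∀ p : LTSeries S, p.length < t := by
    intro p
    by_contra! hp
    refine hS ⟨fun i => (p ⟨i, by omega⟩ : S), ?_, fun i => Subtype.coe_prop _⟩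
    intro i j hij
    exact p.strictMono (by simpa using hij)
  have hlt : ∀ a : S, Order.height a < (t : ℕ∞) := by
    intro a
    have h0 := hlen (RelSeries.singleton _ a)
    have : Order.height a ≤ ((t - 1 : ℕ) : ℕ∞) := by
      refine Order.height_le fun p _ => ?_
      exact_mod_cast Nat.le_sub_one_of_lt (hlen p)
    refine this.trans_lt ?_
    exact_mod_cast (by omega : t - 1 < t)
  have htop : ∀ a : S, Order.height a ≠ ⊤ := fun a => ((hlt a).trans_le le_top).ne
  refine ⟨fun a => if ha : a ∈ S then (Order.height (⟨a, ha⟩ : S)).toNat else 0, ?_, ?_⟩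
  · intro a ha
    have := hlt ⟨a, ha⟩
    rw [← ENat.natCast_toNat (htop ⟨a, ha⟩)] at this
    simpa [ha] using this
  · intro a ha b hb hab
    have := Order.height_strictMono (show (⟨a, ha⟩ : S) < ⟨b, hb⟩ from hab)
      ((hlt _).trans_le le_top)
    rw [← ENat.natCast_toNat (htop ⟨a, ha⟩), ← ENat.natCast_toNat (htop ⟨b, hb⟩)] at this
    simpa [ha, hb] using this

/-- A block decomposition is consistent with at least `∏ |D i|!` permutations: sort `[n]` by block,
then permute inside each block. -/
lemma prod_factorial_le_card {n r : ℕ} (s : Fin r → ℕ) (f : Fin n → Fin r) :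
    ∏ i, (#{x | f x = i}).factorial ≤
      #{σ : Equiv.Perm (Fin n) | Monotone fun x => s (f (σ x))} := by
  classical
  have hcard : Fintype.card {g : Equiv.Perm (Fin n) // f ∘ g = f} =
      ∏ i, (#{x | f x = i}).factorial := by
    rw [DomMulAct.stabilizer_card]
    simp only [Fintype.card_subtype]
  rw [← hcard, Fintype.card_subtype]
  refine card_le_card_of_injOn (fun g => g * Tuple.sort (fun x => s (f x))) ?_ ?_
  · intro g hg
    have hg' : ∀ x, f (g x) = f x := congrFun (mem_filter.1 hg).2
    have := Tuple.monotone_sort (fun x => s (f x))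
    simpa [hg', Function.comp_def] using this
  · intro g _ g' _ h
    simpa using h

/-- If two decompositions are consistent with `σ` and all blocks before `i` agree, then the `i`-th
blocks are comparable. -/
lemma fiber_comparable {n r : ℕ} {s : Fin r → ℕ} (hs : Function.Injective s)
    {σ : Equiv.Perm (Fin n)} {f f' : Fin n → Fin r}
    (hf : Monotone fun x => s (f (σ x))) (hf' : Monotone fun x => s (f' (σ x))) (i : Fin r)
    (hi : ∀ j, s j < s i → ∀ x, f x = j ↔ f' x = j) :
    (∀ x, f x = i → f' x = i) ∨ (∀ x, f' x = i → f x = i) := by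
  by_contra! h
  obtain ⟨⟨x, hx, hx'⟩, y, hy', hy⟩ := h
  have h1 : s i < s (f' x) := by
    by_contra! hle
    have hlt := lt_of_le_of_ne hle (hs.ne hx')
    exact hx' (((hi _ hlt x).2 rfl).symm.trans hx)
  have h2 : s i < s (f y) := by
    by_contra! hle
    have hlt := lt_of_le_of_ne hle (hs.ne hy)
    exact hy (((hi _ hlt y).1 rfl).symm.trans hy')
  rcases le_total (σ.symm x) (σ.symm y) with hxy | hxy
  · have := hf' hxy
    simp only [Equiv.apply_symm_apply, hy'] at this
    omega
  · have := hf hxy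
    simp only [Equiv.apply_symm_apply, hx] at this
    omega

/-- At most `∏_{i ≠ k} t i` members of the family are consistent with a given permutation, where `k`
is the last index in the order `s`. -/
lemma card_consistent_le {n r : ℕ} (t : Fin r → ℕ) (𝒟 : Finset (Fin r → Finset (Fin n)))
    (hchain : ∀ k : Fin r, ChainFree (t k) {A | ∃ D ∈ 𝒟, D k = A})
    (F : (Fin r → Finset (Fin n)) → Fin n → Fin r)
    (hF : ∀ D ∈ 𝒟, ∀ x i, x ∈ D i ↔ F D x = i)
    {s : Fin r → ℕ} (hs : Function.Injective s) (k : Fin r) (hk : ∀ i, i ≠ k → s i < s k)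
    (σ : Equiv.Perm (Fin n)) :
    #{D ∈ 𝒟 | Monotone fun x => s (F D (σ x))} ≤ ∏ i, if i = k then 1 else t i := by
  classical
  choose h hlt hmono using fun i => (hchain i).exists_rank
  have hcard : #(Fintype.piFinset fun i => range (if i = k then 1 else t i)) =
      ∏ i, if i = k then 1 else t i := by simp
  rw [← hcard]
  refine card_le_card_of_injOn (fun D i => if i = k then 0 else h i (D i)) ?_ ?_
  · intro D hD
    have hD' := (mem_filter.1 hD).1
    simp only [mem_coe, Fintype.mem_piFinset, mem_range]
    intro i
    split_ifs
    · exact one_pos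
    · exact hlt i _ ⟨D, hD', rfl⟩
  · intro D hD D' hD' heq
    obtain ⟨hD, hm⟩ := mem_filter.1 hD
    obtain ⟨hD', hm'⟩ := mem_filter.1 hD'
    have key : ∀ m i, s i = m → D i = D' i := by
      intro m
      induction m using Nat.strong_induction_on with
      | _ m ih =>
        rintro i rfl
        have hprev : ∀ j, s j < s i → ∀ x, F D x = j ↔ F D' x = j := fun j hj x => by
          rw [← hF D hD, ← hF D' hD', ih _ hj j rfl]
        by_cases hik : i = k
        · subst hik
          -- the last block is the complement of the union of the others
          ext x
          rw [hF D hD, hF D' hD']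
          constructor
          · intro hx
            by_contra hne
            exact hne (((hprev _ (hk _ hne) x).2 rfl).symm.trans hx)
          · intro hx
            by_contra hne
            exact hne (((hprev _ (hk _ hne) x).1 rfl).symm.trans hx)
        · have hrank : h i (D i) = h i (D' i) := by simpa [hik] using congrFun heq i
          by_contra hne
          rcases fiber_comparable hs hm hm' i hprev with hsub | hsub
          · have hss : D i < D' i := lt_of_le_of_ne
              (fun x hx => (hF D' hD' x i).2 (hsub x ((hF D hD x i).1 hx))) hne
            exact (hmono i _ ⟨D, hD, rfl⟩ _ ⟨D', hD', rfl⟩ hss).ne hrank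
          · have hss : D' i < D i := lt_of_le_of_ne
              (fun x hx => (hF D hD x i).2 (hsub x ((hF D' hD' x i).1 hx))) (Ne.symm hne)
            exact (hmono i _ ⟨D', hD', rfl⟩ _ ⟨D, hD, rfl⟩ hss).ne' hrank
    exact funext fun i => key _ i rfl

/-- **Theorem (generalized LYM inequality for `r`-decompositions of `[n]`).**
If `𝒟` is a family of `r`-decompositions of `[n]` (tuples of pairwise disjoint
subsets whose union is `[n]`) such that the `k`-th component family is
`t k`-chain free for each `k`, then
`∑_{D ∈ 𝒟} 1 / (n choose (|D 1|, …, |D r|)) ≤ (∏ t k) / max t k`. -/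
theorem lym_decomposition_boolean (n r : ℕ) (hr : 0 < r)
    (t : Fin r → ℕ) (ht : ∀ k, 0 < t k)
    (𝒟 : Finset (Fin r → Finset (Fin n)))
    (hdecomp : ∀ D ∈ 𝒟, (∀ i j, i ≠ j → Disjoint (D i) (D j)) ∧
      Finset.univ.sup D = (Finset.univ : Finset (Fin n)))
    (hchain : ∀ k : Fin r, ChainFree (t k) {A | ∃ D ∈ 𝒟, D k = A}) :
    ∑ D ∈ 𝒟, (1 : ℝ) / (Nat.multinomial Finset.univ (fun i => (D i).card) : ℝ) ≤
      (∏ k, (t k : ℝ)) / ((Finset.univ.sup t : ℕ) : ℝ) := by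
  classical
  have hne : (univ : Finset (Fin r)).Nonempty := ⟨⟨0, hr⟩, mem_univ _⟩
  obtain ⟨k, -, hkmax⟩ := exists_mem_eq_sup univ hne t
  have hex : ∀ D : Fin r → Finset (Fin n), ∃ f : Fin n → Fin r,
      D ∈ 𝒟 → ∀ x i, x ∈ D i ↔ f x = i := by
    intro D
    by_cases hD : D ∈ 𝒟
    · obtain ⟨hdis, hsup⟩ := hdecomp D hD
      have hcov : ∀ x, ∃ i, x ∈ D i := fun x => by
        have hx : x ∈ univ.sup D := hsup ▸ mem_univ x
        simpa [mem_sup] using hx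
      choose f hf using hcov
      refine ⟨f, fun _ x i => ⟨fun hx => ?_, fun hx => hx ▸ hf x⟩⟩
      by_contra hfi
      exact disjoint_left.1 (hdis _ _ hfi) (hf x) hx
    · exact ⟨fun _ => ⟨0, hr⟩, fun h => absurd h hD⟩
  choose F hF using hex
  let s : Fin r → ℕ := fun i => if i = k then r else i
  have hs : Function.Injective s := by
    intro i j hij
    simp only [s] at hij
    split_ifs at hij <;> (apply Fin.ext; omega)
  have hk : ∀ i, i ≠ k → s i < s k := fun i hi => by simp [s, hi]
  have hblock : ∀ D ∈ 𝒟, ∀ i, ({x | F D x = i} : Finset (Fin n)) = D i := by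
    intro D hD i
    ext x
    simp [hF D hD]
  have hsum : ∀ D ∈ 𝒟, ∑ i, (D i).card = n := by
    intro D hD
    have := card_eq_sum_card_fiberwise (f := F D) (s := univ) (t := univ) (by simp)
    simp only [hblock D hD, card_univ, Fintype.card_fin] at this
    exact this.symm
  -- `1 / multinomial = ∏ |D i|! / n!`, bounded by the proportion of consistent permutations
  have hterm : ∀ D ∈ 𝒟,
      (1 : ℝ) / (Nat.multinomial univ (fun i => (D i).card) : ℝ) ≤
        (#{σ : Equiv.Perm (Fin n) | Monotone fun x => s (F D (σ x))} : ℝ) / n.factorial := by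
    intro D hD
    have hspec := Nat.multinomial_spec univ (fun i => (D i).card)
    rw [hsum D hD] at hspec
    have hpos : 0 < Nat.multinomial univ (fun i => (D i).card) :=
      Nat.pos_of_ne_zero fun h0 => n.factorial_ne_zero (by rw [← hspec, h0, mul_zero])
    have hle := prod_factorial_le_card s (F D)
    simp only [hblock D hD] at hle
    rw [div_le_div_iff₀ (by exact_mod_cast hpos) (by exact_mod_cast n.factorial_pos), one_mul,
      ← hspec]
    exact_mod_cast Nat.mul_le_mul_right _ hle
  have hdouble : ∑ D ∈ 𝒟, #{σ : Equiv.Perm (Fin n) | Monotone fun x => s (F D (σ x))} ≤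
      n.factorial * ∏ i, if i = k then 1 else t i := by
    calc _ = ∑ σ : Equiv.Perm (Fin n), #{D ∈ 𝒟 | Monotone fun x => s (F D (σ x))} :=
          sum_card_bipartiteAbove_eq_sum_card_bipartiteBelow _
      _ ≤ ∑ _σ : Equiv.Perm (Fin n), ∏ i, (if i = k then 1 else t i) :=
          sum_le_sum fun σ _ => card_consistent_le t 𝒟 hchain F hF hs k hk σ
      _ = _ := by simp [Fintype.card_perm]
  have hprod : (∏ i, if i = k then 1 else t i) * t k = ∏ i, t i := by
    rw [← mul_prod_erase univ t (mem_univ k), ← mul_prod_erase univ _ (mem_univ k), if_pos rfl,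
      one_mul, mul_comm]
    congr 1
    exact prod_congr rfl fun i hi => if_neg (ne_of_mem_erase hi)
  have hnpos : (0 : ℝ) < n.factorial := by exact_mod_cast n.factorial_pos
  rw [hkmax, le_div_iff₀ (by exact_mod_cast ht k)]
  calc _ ≤ (∑ D ∈ 𝒟, (#{σ : Equiv.Perm (Fin n) | Monotone fun x => s (F D (σ x))} : ℝ) /
          n.factorial) * t k := by
        exact mul_le_mul_of_nonneg_right (sum_le_sum hterm) (Nat.cast_nonneg _)
    _ ≤ ((∏ i, if i = k then 1 else t i : ℕ) : ℝ) * t k := by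
        gcongr
        rw [← sum_div, div_le_iff₀ hnpos, mul_comm]
        exact_mod_cast hdouble
    _ = ∏ i, (t i : ℝ) := by exact_mod_cast hprod
end

section
/- Let $t_1, \ldots, t_r$ be positive integers and set $\sigma = \frac{t_1 t_2 \cdots t_r}{\max\{t_1,\ldots,t_r\}}$. Let $\mathcal{D}$ be a family of $r$-decompositions of $[n]$ such that for each $k \in \{1,\ldots,r\}$ the family $\mathcal{D}_k$ is $t_k$-chain free. Then $|\mathcal{D}| \le m_1 + \cdots + m_\sigma$, where $m_1,\ldots,m_\sigma$ are the $\sigma$ largest multinomial coefficients $\binom{n}{a_1,\ldots,a_r}$ over all $r$-tuples of non-negative integers $(a_1,\ldots,a_r)$ with $a_1+\cdots+a_r = n$ (with $m_i = 0$ when $i$ exceeds the number $\binom{n+r-1}{r-1}$ of such tuples). -/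
/-- The sum of the `k` largest elements of a multiset of naturals. -/
def sumLargest (M : Multiset ℕ) (k : ℕ) : ℕ :=
  (((M.sort (· ≤ ·)).reverse).take k).sum

/-! ### The LYM inequality for chain free families -/

theorem ChainFree.mono {α : Type*} [Preorder α] {t : ℕ} {S T : Set α} (h : ChainFree t T)
    (hST : S ⊆ T) : ChainFree t S := by
  rintro ⟨c, hc, hcS⟩
  exact h ⟨c, hc, fun i => hST (hcS i)⟩

/-- Deleting the minimal members of a family, which form an antichain, shortens its longest
chains by one; hence the LYM sum is at most the number `t` of antichains needed. -/
theorem sum_inv_choose_le_of_chainFree {α : Type*} [Fintype α] [DecidableEq α] (t : ℕ) :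
    ∀ 𝒜 : Finset (Finset α), ChainFree t (𝒜 : Set (Finset α)) →
      ∑ A ∈ 𝒜, ((Fintype.card α).choose A.card : ℚ)⁻¹ ≤ t := by
  classical
  induction t with
  | zero =>
    intro 𝒜 h
    have : 𝒜 = ∅ := by
      by_contra hne
      obtain ⟨A, hA⟩ := Finset.nonempty_iff_ne_empty.2 hne
      exact h ⟨fun _ => A, fun i j hij => absurd hij (by omega), fun _ => hA⟩
    simp [this]
  | succ t ih =>
    intro 𝒜 h
    have hmin : ∑ A ∈ 𝒜 with Minimal (· ∈ 𝒜) A, ((Fintype.card α).choose A.card : ℚ)⁻¹ ≤ 1 := by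
      apply Finset.lubell_yamamoto_meshalkin_inequality_sum_inv_choose
      intro A hA B hB hne hAB
      simp only [Finset.coe_filter, Set.mem_ofPred_eq] at hA hB
      exact hne (hB.2.eq_of_le hA.1 hAB)
    have hrest := ih (𝒜.filter fun A => ¬ Minimal (· ∈ 𝒜) A) (by
      rintro ⟨c, hc, hcS⟩
      simp only [Finset.coe_filter, Set.mem_ofPred_eq] at hcS
      -- Below the bottom `c 0` there is a further member `B` of `𝒜`, which prolongs the chain.
      obtain ⟨B, hlt, hB⟩ := (not_minimal_iff_exists_lt (hcS 0).1).1 (hcS 0).2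
      refine h ⟨Fin.cons B c, ?_, ?_⟩
      · rw [Fin.strictMono_iff_lt_succ]
        intro i
        refine Fin.cases ?_ (fun i => ?_) i
        · simpa using hlt
        · simpa [← Fin.succ_castSucc] using hc (Fin.castSucc_lt_succ)
      · intro i
        refine Fin.cases ?_ (fun i => ?_) i
        · simpa using hB
        · simpa using (hcS i).1)
    rw [← Finset.sum_filter_add_sum_filter_not 𝒜 (fun A => Minimal (· ∈ 𝒜) A)]
    push_cast
    linarith

theorem sum_inv_choose_le_of_subset {α : Type*} [DecidableEq α] (t : ℕ) (X : Finset α)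
    (𝒜 : Finset (Finset α)) (hX : ∀ A ∈ 𝒜, A ⊆ X) (h : ChainFree t (𝒜 : Set (Finset α))) :
    ∑ A ∈ 𝒜, (X.card.choose A.card : ℚ)⁻¹ ≤ t := by
  classical
  have key : ∀ A ∈ 𝒜, (A.subtype (· ∈ X)).map (Function.Embedding.subtype _) = A := fun A hA =>
    Finset.subtype_map_of_mem fun x hx => hX A hA hx
  have hinj : Set.InjOn (fun A : Finset α => A.subtype (· ∈ X)) (𝒜 : Set (Finset α)) := by
    intro A hA B hB hAB
    rw [← key A hA, ← key B hB]
    exact congrArg _ hAB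
  have := sum_inv_choose_le_of_chainFree t (𝒜.image fun A => A.subtype (· ∈ X)) (by
    rintro ⟨c, hc, hcS⟩
    refine h ⟨fun i => (c i).map (Function.Embedding.subtype _),
      fun i j hij => Finset.map_ssubset_map.2 (hc hij), fun i => ?_⟩
    obtain ⟨A, hA, hAc⟩ := Finset.mem_image.1 (hcS i)
    change (c i).map _ ∈ 𝒜
    rwa [← hAc, key A hA])
  rw [Finset.sum_image hinj] at this
  refine le_trans (le_of_eq (Finset.sum_congr rfl fun A hA => ?_)) this
  rw [Fintype.card_coe]
  congr 3
  conv_lhs => rw [← key A hA]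
  rw [Finset.card_map]

/-! ### The LYM inequality for decompositions -/

/-- `D` is a decomposition of the whole type `α` into disjoint, possibly empty, parts. -/
def IsDecomp {ι α : Type*} (D : ι → Finset α) : Prop :=
  (∀ i j, i ≠ j → Disjoint (D i) (D j)) ∧ ∀ x, ∃ i, x ∈ D i

theorem IsDecomp.biUnion_subset {ι α : Type*} [DecidableEq α] {D E : ι → Finset α}
    (hD : IsDecomp D) (hE : IsDecomp E) {S : Finset ι} (h : ∀ i ∉ S, D i = E i) :
    S.biUnion D ⊆ S.biUnion E := by
  intro x hx
  obtain ⟨i, hi, hxi⟩ := Finset.mem_biUnion.1 hx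
  obtain ⟨l, hl⟩ := hE.2 x
  refine Finset.mem_biUnion.2 ⟨l, ?_, hl⟩
  by_contra hlS
  rw [← h l hlS] at hl
  exact Finset.disjoint_left.1 (hD.1 i l (by rintro rfl; exact hlS hi)) hxi hl

/-- The LYM inequality for decompositions whose components outside `insert j s` are frozen. No
condition is imposed on the `j`-th components, since `D j` is the complement of the other parts. -/
theorem sum_inv_multinomial_le_of_eq {ι α : Type*} [DecidableEq ι] [DecidableEq α]
    (t : ι → ℕ) (j : ι) (s : Finset ι) :
    j ∉ s → ∀ 𝒟 : Finset (ι → Finset α), (∀ D ∈ 𝒟, IsDecomp D) →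
      (∀ D ∈ 𝒟, ∀ E ∈ 𝒟, ∀ i ∉ insert j s, D i = E i) →
      (∀ k ∈ s, ChainFree (t k) {A | ∃ D ∈ 𝒟, D k = A}) →
      ∑ D ∈ 𝒟, (Nat.multinomial (insert j s) (fun i => (D i).card) : ℚ)⁻¹ ≤
        ((∏ k ∈ s, t k : ℕ) : ℚ) := by
  classical
  induction s using Finset.induction_on with
  | empty =>
    intro _ 𝒟 hdec heq _
    have hcard : 𝒟.card ≤ 1 := by
      rw [Finset.card_le_one]
      intro D hD E hE
      have hsub := (hdec D hD).biUnion_subset (hdec E hE) (heq D hD E hE)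
      have hsup := (hdec E hE).biUnion_subset (hdec D hD) (heq E hE D hD)
      simp only [insert_empty_eq, Finset.singleton_biUnion] at hsub hsup
      funext i
      by_cases hij : i = j
      · subst hij
        exact hsub.antisymm hsup
      · exact heq D hD E hE i (by simpa using hij)
    simpa using hcard
  | insert k s hk ih =>
    intro hj 𝒟 hdec heq hchain
    rcases 𝒟.eq_empty_or_nonempty with rfl | ⟨D₀, hD₀⟩
    · simp
      positivity
    have hjk : k ≠ j := fun h => hj (by simp [h])
    have hjs : j ∉ s := fun h => hj (by simp [h])
    have hk' : k ∉ insert j s := by simp [hjk, hk]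
    rw [Finset.insert_comm] at heq ⊢
    -- All the members of `𝒟` decompose the same set `X` into the parts that are not frozen.
    set X : Finset α := (insert k (insert j s)).biUnion D₀ with hX
    have hXeq : ∀ D ∈ 𝒟, (insert k (insert j s)).biUnion D = X := fun D hD =>
      ((hdec D hD).biUnion_subset (hdec D₀ hD₀) (heq D hD D₀ hD₀)).antisymm
        ((hdec D₀ hD₀).biUnion_subset (hdec D hD) (heq D₀ hD₀ D hD))
    have hXcard : ∀ D ∈ 𝒟, (D k).card + ∑ i ∈ insert j s, (D i).card = X.card := by
      intro D hD
      rw [← hXeq D hD, Finset.card_biUnion (fun i _ l _ hil => (hdec D hD).1 i l hil),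
        Finset.sum_insert hk']
    have hfib : ∀ A : Finset α,
        ∑ D ∈ 𝒟 with D k = A, (Nat.multinomial (insert j s) (fun i => (D i).card) : ℚ)⁻¹ ≤
          ((∏ k ∈ s, t k : ℕ) : ℚ) := by
      intro A
      refine ih hjs _ (fun D hD => hdec D (Finset.mem_filter.1 hD).1) ?_ ?_
      · intro D hD E hE i hi
        rw [Finset.mem_filter] at hD hE
        by_cases hik : i = k
        · rw [hik, hD.2, hE.2]
        · exact heq D hD.1 E hE.1 i (by simpa [hik] using hi)
      · intro l hl
        refine (hchain l (Finset.mem_insert_of_mem hl)).mono ?_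
        rintro B ⟨D, hD, rfl⟩
        exact ⟨D, (Finset.mem_filter.1 hD).1, rfl⟩
    have hlym : ∑ A ∈ 𝒟.image (· k), (X.card.choose A.card : ℚ)⁻¹ ≤ t k := by
      refine sum_inv_choose_le_of_subset _ _ _ ?_ ?_
      · intro A hA
        obtain ⟨D, hD, rfl⟩ := Finset.mem_image.1 hA
        rw [← hXeq D hD]
        exact Finset.subset_biUnion_of_mem D (Finset.mem_insert_self _ _)
      · refine (hchain k (Finset.mem_insert_self _ _)).mono ?_
        intro A hA
        simpa using hA
    calc ∑ D ∈ 𝒟, (Nat.multinomial (insert k (insert j s)) (fun i => (D i).card) : ℚ)⁻¹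
        = ∑ D ∈ 𝒟, (X.card.choose (D k).card : ℚ)⁻¹ *
            (Nat.multinomial (insert j s) (fun i => (D i).card) : ℚ)⁻¹ := by
          refine Finset.sum_congr rfl fun D hD => ?_
          rw [Nat.multinomial_insert hk', hXcard D hD, Nat.cast_mul, mul_inv]
      _ = ∑ A ∈ 𝒟.image (· k), ∑ D ∈ 𝒟 with D k = A, (X.card.choose (D k).card : ℚ)⁻¹ *
            (Nat.multinomial (insert j s) (fun i => (D i).card) : ℚ)⁻¹ :=
          (Finset.sum_fiberwise_of_maps_to (fun D hD => Finset.mem_image_of_mem _ hD) _).symm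
      _ = ∑ A ∈ 𝒟.image (· k), (X.card.choose A.card : ℚ)⁻¹ * ∑ D ∈ 𝒟 with D k = A,
            (Nat.multinomial (insert j s) (fun i => (D i).card) : ℚ)⁻¹ := by
          refine Finset.sum_congr rfl fun A _ => ?_
          rw [Finset.mul_sum]
          refine Finset.sum_congr rfl fun D hD => ?_
          rw [(Finset.mem_filter.1 hD).2]
      _ ≤ ∑ A ∈ 𝒟.image (· k), (X.card.choose A.card : ℚ)⁻¹ * ((∏ k ∈ s, t k : ℕ) : ℚ) := by
          gcongr with A _
          exact hfib A
      _ = (∑ A ∈ 𝒟.image (· k), (X.card.choose A.card : ℚ)⁻¹) * ((∏ k ∈ s, t k : ℕ) : ℚ) := by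
          rw [Finset.sum_mul]
      _ ≤ t k * ((∏ k ∈ s, t k : ℕ) : ℚ) := by gcongr
      _ = ((∏ k ∈ insert k s, t k : ℕ) : ℚ) := by
          rw [Finset.prod_insert hk, Nat.cast_mul]

theorem sum_inv_multinomial_le {ι α : Type*} [Fintype ι] [DecidableEq ι] [DecidableEq α]
    (t : ι → ℕ) (j : ι) (𝒟 : Finset (ι → Finset α)) (hdec : ∀ D ∈ 𝒟, IsDecomp D)
    (hchain : ∀ k, ChainFree (t k) {A | ∃ D ∈ 𝒟, D k = A}) :
    ∑ D ∈ 𝒟, (Nat.multinomial Finset.univ (fun i => (D i).card) : ℚ)⁻¹ ≤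
      ((∏ k ∈ Finset.univ.erase j, t k : ℕ) : ℚ) := by
  have h := sum_inv_multinomial_le_of_eq t j (Finset.univ.erase j) (Finset.notMem_erase _ _) 𝒟
    hdec (by simp) (fun k _ => hchain k)
  rwa [Finset.insert_erase (Finset.mem_univ j)] at h

/-- A special case of the LYM inequality: sets of equal size form an antichain, so all the
`t k` can be taken to be `1`. -/
theorem card_filter_type_le {ι α : Type*} [Fintype ι] [DecidableEq ι] [DecidableEq α]
    (j : ι) (𝒟 : Finset (ι → Finset α)) (hdec : ∀ D ∈ 𝒟, IsDecomp D) (a : ι → ℕ) :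
    (𝒟.filter fun D => (fun i => (D i).card) = a).card ≤ Nat.multinomial Finset.univ a := by
  have h := sum_inv_multinomial_le (fun _ => 1) j (𝒟.filter fun D => (fun i => (D i).card) = a)
    (fun D hD => hdec D (Finset.mem_filter.1 hD).1) (by
      rintro k ⟨c, hc, hcS⟩
      have hcard : ∀ i, (c i).card = a k := by
        intro i
        obtain ⟨D, hD, hDc⟩ := hcS i
        rw [← hDc, ← (Finset.mem_filter.1 hD).2]
      have hlt := Finset.card_lt_card (hc (show (0 : Fin 2) < 1 by decide))
      rw [hcard, hcard] at hlt
      exact lt_irrefl _ hlt)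
  rw [Finset.sum_congr rfl (g := fun _ => (Nat.multinomial Finset.univ a : ℚ)⁻¹)
    (fun D hD => by rw [(Finset.mem_filter.1 hD).2])] at h
  have hpos : (0 : ℚ) < Nat.multinomial Finset.univ a := mod_cast Nat.multinomial_pos _ _
  simp only [Finset.sum_const, nsmul_eq_mul, Finset.prod_const_one, Nat.cast_one] at h
  rw [← div_eq_mul_inv, div_le_one hpos] at h
  exact_mod_cast h

/-! ### Weighted sums and the largest entries -/

/-- The multiplier `θ` is a threshold separating the `k` largest values from the others. Keeping
the error term `θ * (∑ x - k)` is what makes the induction on the list work. -/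
theorem exists_threshold {β : Type*} (m : β → ℕ) (x : β → ℚ) (hx0 : ∀ b, 0 ≤ x b)
    (hx1 : ∀ b, x b ≤ 1) : ∀ (L : List β) (k B : ℕ), (L.map m).Pairwise (· ≥ ·) →
      (∀ b ∈ L, m b ≤ B) → ∃ θ : ℚ, 0 ≤ θ ∧ θ ≤ B ∧
        (L.map fun b => x b * m b).sum ≤
          (((L.map m).take k).sum : ℕ) + θ * ((L.map x).sum - k)
  | [], k, B, _, _ => ⟨0, le_rfl, by positivity, by simp⟩
  | b :: L, 0, B, _, hB => by
    refine ⟨B, by positivity, le_rfl, ?_⟩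
    have : ∀ L : List β, (∀ b ∈ L, m b ≤ B) →
        (L.map fun b => x b * m b).sum ≤ B * (L.map x).sum := by
      intro L hL
      induction L with
      | nil => simp
      | cons c L ih =>
        have h1 := ih fun b hb => hL b (List.mem_cons_of_mem _ hb)
        have h2 : (m c : ℚ) ≤ B := mod_cast hL c List.mem_cons_self
        have h3 := mul_le_mul_of_nonneg_left h2 (hx0 c)
        simp only [List.map_cons, List.sum_cons]
        linarith
    simpa using this (b :: L) hB
  | b :: L, k + 1, B, hL, hB => by
    rw [List.map_cons, List.pairwise_cons] at hL
    obtain ⟨θ, h0, hθ, h⟩ := exists_threshold m x hx0 hx1 L k (m b) hL.2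
      (fun c hc => hL.1 _ (List.mem_map_of_mem hc))
    have hbB : (m b : ℚ) ≤ B := mod_cast hB b List.mem_cons_self
    refine ⟨θ, h0, hθ.trans hbB, ?_⟩
    have h1 := mul_le_mul_of_nonneg_left hθ (sub_nonneg.2 (hx1 b))
    simp only [List.map_cons, List.sum_cons, List.take_succ_cons]
    push_cast at h ⊢
    linarith

theorem sum_mul_le_sumLargest {β : Type*} (T : Finset β) (m : β → ℕ) (x : β → ℚ)
    (hx0 : ∀ b, 0 ≤ x b) (hx1 : ∀ b, x b ≤ 1) (k : ℕ) (hk : ∑ b ∈ T, x b ≤ k) :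
    ∑ b ∈ T, x b * m b ≤ (sumLargest (T.val.map m) k : ℚ) := by
  classical
  let R : β → β → Prop := fun a b => m b ≤ m a
  have : Std.Total R := ⟨fun a b => le_total (m b) (m a)⟩
  have : IsTrans β R := ⟨fun a b c hab hbc => le_trans hbc hab⟩
  let L := T.toList.insertionSort R
  have hperm : L.Perm T.toList := List.perm_insertionSort R _
  have hsum : ∀ f : β → ℚ, (L.map f).sum = ∑ b ∈ T, f b := fun f => by
    rw [(hperm.map f).sum_eq, Finset.sum_map_toList]
  have hpw : (L.map m).Pairwise (· ≥ ·) :=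
    List.pairwise_map.2 (List.pairwise_insertionSort R _)
  have hsort : ((T.val.map m).sort (· ≤ ·)).reverse = L.map m := by
    refine List.Perm.eq_of_pairwise' (r := (· ≥ ·)) ?_ hpw ?_
    · rw [List.pairwise_reverse]
      exact Multiset.pairwise_sort _ _
    · refine (List.reverse_perm _).trans ?_
      rw [← Multiset.coe_eq_coe, Multiset.sort_eq, ← Multiset.map_coe,
        Multiset.coe_eq_coe.2 hperm, Finset.coe_toList]
  obtain ⟨θ, h0, -, h⟩ := exists_threshold m x hx0 hx1 L k (L.map m).sum hpw
    (fun b hb => List.le_sum_of_mem (List.mem_map_of_mem hb))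
  rw [hsum, hsum] at h
  rw [sumLargest, hsort]
  have := mul_nonneg h0 (sub_nonneg.2 hk)
  linarith

/-- **Theorem (bound on families of `r`-decompositions of `[n]`).**
If `𝒟` is a family of `r`-decompositions of `[n]` such that the `k`-th component
family is `t k`-chain free for each `k`, then `|𝒟| ≤ m₁ + ⋯ + m_σ`, where
`σ = (∏ t k) / max t k` and `m₁, …, m_σ` are the `σ` largest multinomial
coefficients `n choose (a 1, …, a r)` over tuples with `∑ a i = n`. -/
theorem card_bound_decomposition_boolean (n r : ℕ) (hr : 0 < r)
    (t : Fin r → ℕ) (ht : ∀ k, 0 < t k)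
    (𝒟 : Finset (Fin r → Finset (Fin n)))
    (hdecomp : ∀ D ∈ 𝒟, (∀ i j, i ≠ j → Disjoint (D i) (D j)) ∧
      Finset.univ.sup D = (Finset.univ : Finset (Fin n)))
    (hchain : ∀ k : Fin r, ChainFree (t k) {A | ∃ D ∈ 𝒟, D k = A}) :
    𝒟.card ≤ sumLargest
      ((Finset.Nat.antidiagonalTuple r n).val.map
        (fun a => Nat.multinomial Finset.univ a))
      ((∏ k, t k) / Finset.univ.sup t) := by
  classical
  have hdec : ∀ D ∈ 𝒟, IsDecomp D := fun D hD => ⟨(hdecomp D hD).1, fun x => by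
    have hx : x ∈ Finset.univ.sup D := by rw [(hdecomp D hD).2]; exact Finset.mem_univ x
    obtain ⟨i, -, hi⟩ := Finset.mem_sup.1 hx
    exact ⟨i, hi⟩⟩
  obtain ⟨j, -, hj⟩ := Finset.exists_mem_eq_sup (Finset.univ : Finset (Fin r))
    ⟨⟨0, hr⟩, Finset.mem_univ _⟩ t
  have hσ : (∏ k, t k) / Finset.univ.sup t = ∏ k ∈ Finset.univ.erase j, t k := by
    rw [hj, ← Finset.mul_prod_erase _ _ (Finset.mem_univ j), Nat.mul_div_cancel_left _ (ht j)]
  rw [hσ]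
  let m : (Fin r → ℕ) → ℕ := fun a => Nat.multinomial Finset.univ a
  have hm : ∀ a, (0 : ℚ) < m a := fun a => mod_cast Nat.multinomial_pos _ _
  let τ : (Fin r → Finset (Fin n)) → Fin r → ℕ := fun D i => (D i).card
  -- the proportion of the decompositions of type `a` that belong to `𝒟`
  let x : (Fin r → ℕ) → ℚ := fun a => ((𝒟.filter fun D => τ D = a).card : ℚ) * (m a : ℚ)⁻¹
  have hmaps : ∀ D ∈ 𝒟, τ D ∈ Finset.Nat.antidiagonalTuple r n := by
    intro D hD
    rw [Finset.Nat.mem_antidiagonalTuple]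
    change ∑ i, (D i).card = n
    rw [← Finset.card_biUnion (fun i _ l _ hil => (hdec D hD).1 i l hil),
      ← Finset.sup_eq_biUnion, (hdecomp D hD).2, Finset.card_univ, Fintype.card_fin]
  have hx1 : ∀ a, x a ≤ 1 := by
    intro a
    change _ * _ ≤ _
    rw [← div_eq_mul_inv, div_le_one (hm a)]
    exact_mod_cast card_filter_type_le j 𝒟 hdec a
  have hsum : ∑ a ∈ Finset.Nat.antidiagonalTuple r n, x a ≤
      ((∏ k ∈ Finset.univ.erase j, t k : ℕ) : ℚ) := by
    refine le_trans (le_of_eq ?_) (sum_inv_multinomial_le t j 𝒟 hdec hchain)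
    rw [← Finset.sum_fiberwise_of_maps_to hmaps]
    refine Finset.sum_congr rfl fun a _ => ?_
    rw [Finset.sum_congr rfl (g := fun _ => (m a : ℚ)⁻¹)
      (fun D hD => by rw [← (Finset.mem_filter.1 hD).2])]
    simp [x]
  have hmain := sum_mul_le_sumLargest (Finset.Nat.antidiagonalTuple r n) m x
    (fun a => by positivity) hx1 _ hsum
  have hcard : ∑ a ∈ Finset.Nat.antidiagonalTuple r n, x a * m a = (𝒟.card : ℚ) := by
    rw [Finset.card_eq_sum_card_fiberwise hmaps, Nat.cast_sum]
    exact Finset.sum_congr rfl fun a _ => inv_mul_cancel_right₀ (hm a).ne' _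
  rw [hcard] at hmain
  exact_mod_cast hmain
end

section
/- Let $t_1, \ldots, t_r$ be positive integers and set $\tau = t_1 t_2 \cdots t_r$. Let $\mathcal{C}$ be a family of $r$-multichains in $B(n)$ such that for each $k \in \{1,\ldots,r\}$ the family $\mathcal{C}_k$ is $t_k$-chain free. Then $\sum_{(C_1,\ldots,C_r) \in \mathcal{C}} \binom{n}{|C_1|,\,|C_2 \setminus C_1|,\,\ldots,\,|C_r \setminus C_{r-1}|,\,|[n] \setminus C_r|}^{-1} \le \tau$, where $\binom{n}{a_1,\ldots,a_{r+1}} = n!/(a_1!\cdots a_{r+1}!)$ is the multinomial coefficient. -/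
/-- For an `r`-multichain `C₁ ⊆ C₂ ⊆ ⋯ ⊆ C_r` in `B(n)`, the `(r+1)`-tuple of
successive set differences `(C₁, C₂ \ C₁, …, C_r \ C_{r-1}, [n] \ C_r)`. -/
def chainParts (n r : ℕ) (C : Fin r → Finset (Fin n)) (i : Fin (r + 1)) :
    Finset (Fin n) :=
  (if h : (i : ℕ) < r then C ⟨i, h⟩ else Finset.univ) \
    (if h : 0 < (i : ℕ) then C ⟨(i : ℕ) - 1, by have := i.isLt; omega⟩ else ∅)

open Finset

/-- `Compatible C σ`: each `C k` is an initial segment of the word `σ 0, σ 1, …, σ (n - 1)`. -/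
def Compatible {n r : ℕ} (C : Fin r → Finset (Fin n)) (σ : Equiv.Perm (Fin n)) : Prop :=
  ∀ k i j, i ≤ j → σ j ∈ C k → σ i ∈ C k

lemma card_le_of_chainFree {n t : ℕ} {S : Set (Finset (Fin n))} (hS : ChainFree t S)
    (T : Finset (Finset (Fin n))) (hTS : ∀ A ∈ T, A ∈ S)
    (hT : ∀ A ∈ T, ∀ B ∈ T, A ⊆ B ∨ B ⊆ A) : #T ≤ t := by
  by_contra! hlt
  -- Members of a chain are determined by their cardinality, so `T` is enumerated by cardinalities.
  have hinj : Set.InjOn card (T : Set (Finset (Fin n))) := by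
    intro A hA B hB hAB
    rcases hT A hA B hB with h | h
    · exact eq_of_subset_of_card_le h hAB.ge
    · exact (eq_of_subset_of_card_le h hAB.le).symm
  have hcard : t + 1 ≤ #(T.image card) := by rw [card_image_of_injOn hinj]; exact hlt
  let e := (T.image card).orderEmbOfCardLe hcard
  have he : ∀ i, ∃ A ∈ T, #A = e i := fun i =>
    mem_image.1 ((T.image card).orderEmbOfCardLe_mem hcard i)
  choose c hcT hc using he
  refine hS ⟨c, fun i j hij => ?_, fun i => hTS _ (hcT i)⟩
  have hlt' : #(c i) < #(c j) := by rw [hc, hc]; exact e.strictMono hij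
  rcases hT _ (hcT i) _ (hcT j) with h | h
  · exact lt_of_le_of_ne h (fun heq => by rw [heq] at hlt'; exact lt_irrefl _ hlt')
  · exact absurd (card_le_card h) (by omega)

open Classical in
lemma card_compatible_le {n r : ℕ} (t : Fin r → ℕ) (𝒞 : Finset (Fin r → Finset (Fin n)))
    (hchain : ∀ k : Fin r, ChainFree (t k) {A | ∃ C ∈ 𝒞, C k = A}) (σ : Equiv.Perm (Fin n)) :
    #{C ∈ 𝒞 | Compatible C σ} ≤ ∏ k, t k := by
  set D := {C ∈ 𝒞 | Compatible C σ} with hD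
  have hsub : D ⊆ Fintype.piFinset (fun k => D.image (fun C => C k)) := by
    intro C hC
    exact Fintype.mem_piFinset.2 fun k => mem_image_of_mem _ hC
  refine (card_le_card hsub).trans ?_
  rw [Fintype.card_piFinset]
  refine prod_le_prod' fun k _ => card_le_of_chainFree (hchain k) _ ?_ ?_
  · intro A hA
    obtain ⟨C, hC, rfl⟩ := mem_image.1 hA
    exact ⟨C, (mem_filter.1 hC).1, rfl⟩
  · intro A hA B hB
    obtain ⟨C, hC, rfl⟩ := mem_image.1 hA
    obtain ⟨C', hC', rfl⟩ := mem_image.1 hB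
    have h1 := (mem_filter.1 hC).2
    have h2 := (mem_filter.1 hC').2
    by_contra! hne
    obtain ⟨⟨x, hx, hx'⟩, ⟨y, hy, hy'⟩⟩ := And.imp not_subset.1 not_subset.1 hne
    obtain ⟨i, rfl⟩ := σ.surjective x
    obtain ⟨j, rfl⟩ := σ.surjective y
    rcases le_total i j with hij | hij
    · exact hx' (h2 k i j hij hy)
    · exact hy' (h1 k j i hij hx)

/-- The index of the part of the multichain `C` containing `x`, computed as the number of members
of `C` that miss `x`. -/
def partIndex {n r : ℕ} (C : Fin r → Finset (Fin n)) (x : Fin n) : Fin (r + 1) :=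
  ⟨#{k | x ∉ C k}, Nat.lt_succ_of_le ((card_le_univ _).trans (Fintype.card_fin r).le)⟩

lemma mem_iff_partIndex_le {n r : ℕ} {C : Fin r → Finset (Fin n)} (hC : Monotone C) (x : Fin n)
    (k : Fin r) : x ∈ C k ↔ (partIndex C x : ℕ) ≤ k := by
  constructor
  · intro hx
    have hsub : ({k | x ∉ C k} : Finset (Fin r)) ⊆ Iio k := by
      intro l hl
      rw [mem_Iio]
      by_contra! hkl
      exact (mem_filter.1 hl).2 (hC hkl hx)
    simpa [partIndex] using card_le_card hsub
  · intro hle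
    by_contra hx
    have hsub : Iic k ⊆ ({k | x ∉ C k} : Finset (Fin r)) := by
      intro l hl
      exact mem_filter.2 ⟨mem_univ _, fun h => hx (hC (mem_Iic.1 hl) h)⟩
    have := card_le_card hsub
    rw [Fin.card_Iic] at this
    simp only [partIndex] at hle
    omega

lemma chainParts_eq {n r : ℕ} {C : Fin r → Finset (Fin n)} (hC : Monotone C) (i : Fin (r + 1)) :
    chainParts n r C i = ({x | partIndex C x = i} : Finset (Fin n)) := by
  ext x
  have hi := i.isLt
  have hp := (partIndex C x).isLt
  simp only [chainParts, mem_sdiff, mem_filter, mem_univ, true_and, Fin.ext_iff]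
  split_ifs with h1 h2 h2 <;>
    simp only [mem_iff_partIndex_le hC, mem_univ, notMem_empty, not_false_eq_true, true_and,
      and_true, true_iff] <;> omega

open Classical in
lemma le_card_compatible {n r : ℕ} {C : Fin r → Finset (Fin n)} (hC : Monotone C) :
    ∏ i, (#(chainParts n r C i)).factorial ≤ #{σ | Compatible C σ} := by
  have hstab := DomMulAct.stabilizer_card (partIndex C)
  have hparts : ∏ i, (#(chainParts n r C i)).factorial =
      Fintype.card {g : Equiv.Perm (Fin n) // partIndex C ∘ g = partIndex C} := by
    rw [hstab]
    refine prod_congr rfl fun i _ => ?_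
    rw [chainParts_eq hC, Fintype.card_subtype]
  rw [hparts, Fintype.card_subtype]
  refine card_le_card_of_injOn (fun g => g * Tuple.sort (partIndex C)) ?_ ?_
  · intro g hg
    have hg' : partIndex C ∘ g = partIndex C := by simpa using hg
    simp only [coe_filter, mem_univ, true_and, Set.mem_ofPred_eq]
    intro k i j hij hj
    have hinv : ∀ x, partIndex C (g x) = partIndex C x := fun x => congrFun hg' x
    rw [mem_iff_partIndex_le hC, Equiv.Perm.mul_apply, hinv] at hj ⊢
    exact le_trans (Fin.le_def.1 (Tuple.monotone_sort (partIndex C) hij)) hj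
  · intro g _ g' _ h
    exact mul_right_cancel h

lemma inv_multinomial_eq {n r : ℕ} {C : Fin r → Finset (Fin n)} (hC : Monotone C) :
    (1 : ℝ) / (Nat.multinomial univ (fun i => #(chainParts n r C i)) : ℝ) =
      ((∏ i, (#(chainParts n r C i)).factorial : ℕ) : ℝ) / (n.factorial : ℝ) := by
  have hsum : ∑ i, #(chainParts n r C i) = n := by
    simp only [chainParts_eq hC]
    rw [← card_eq_sum_card_fiberwise (fun x _ => mem_univ _), card_univ, Fintype.card_fin]
  have hspec := Nat.multinomial_spec univ (fun i => #(chainParts n r C i))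
  rw [hsum] at hspec
  have hpos : (Nat.multinomial univ (fun i => #(chainParts n r C i)) : ℝ) ≠ 0 :=
    Nat.cast_ne_zero.2 (Nat.multinomial_pos _ _).ne'
  have hfac : (n.factorial : ℝ) ≠ 0 := Nat.cast_ne_zero.2 n.factorial_ne_zero
  rw [div_eq_div_iff hpos hfac, one_mul, ← hspec]
  push_cast
  ring

/-- **Theorem (generalized LYM inequality for `r`-multichains in `B(n)`).**
If `𝒞` is a family of `r`-multichains in `B(n)` such that the `k`-th component
family is `t k`-chain free for each `k`, then
`∑_{C ∈ 𝒞} 1 / (n choose (|C₁|, |C₂ \ C₁|, …, |[n] \ C_r|)) ≤ t₁ t₂ ⋯ t_r`. -/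
theorem lym_multichain_boolean (n r : ℕ)
    (t : Fin r → ℕ) (ht : ∀ k, 0 < t k)
    (𝒞 : Finset (Fin r → Finset (Fin n)))
    (hmc : ∀ C ∈ 𝒞, Monotone C)
    (hchain : ∀ k : Fin r, ChainFree (t k) {A | ∃ C ∈ 𝒞, C k = A}) :
    ∑ C ∈ 𝒞, (1 : ℝ) /
        (Nat.multinomial Finset.univ (fun i => (chainParts n r C i).card) : ℝ) ≤
      ∏ k, (t k : ℝ) := by
  classical
  rw [sum_congr rfl fun C hC => inv_multinomial_eq (hmc C hC), ← sum_div,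
    div_le_iff₀ (Nat.cast_pos.2 n.factorial_pos)]
  have hcount : ∑ C ∈ 𝒞, ∏ i, (#(chainParts n r C i)).factorial ≤ (∏ k, t k) * n.factorial :=
    calc ∑ C ∈ 𝒞, ∏ i, (#(chainParts n r C i)).factorial
        ≤ ∑ C ∈ 𝒞, #{σ : Equiv.Perm (Fin n) | Compatible C σ} :=
          sum_le_sum fun C hC => le_card_compatible (hmc C hC)
      _ = ∑ σ : Equiv.Perm (Fin n), #{C ∈ 𝒞 | Compatible C σ} :=
          sum_card_bipartiteAbove_eq_sum_card_bipartiteBelow Compatible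
      _ ≤ ∑ _σ : Equiv.Perm (Fin n), ∏ k, t k :=
          sum_le_sum fun σ _ => card_compatible_le t 𝒞 hchain σ
      _ = (∏ k, t k) * n.factorial := by
          rw [sum_const, card_univ, Fintype.card_perm, Fintype.card_fin, smul_eq_mul, mul_comm]
  exact_mod_cast hcount
end

section
/- Let $t_1, \ldots, t_r$ be positive integers and set $\tau = t_1 t_2 \cdots t_r$. Let $\mathcal{C}$ be a family of $r$-multichains in $B(n)$ such that for each $k \in \{1,\ldots,r\}$ the family $\mathcal{C}_k$ is $t_k$-chain free. Then $|\mathcal{C}| \le m_1 + \cdots + m_\tau$, where $m_1,\ldots,m_\tau$ are the $\tau$ largest multinomial coefficients $\binom{n}{a_1,\ldots,a_{r+1}}$ over all $(r+1)$-tuples of non-negative integers $(a_1,\ldots,a_{r+1})$ with $a_1+\cdots+a_{r+1} = n$ (with $m_i = 0$ when $i$ exceeds the number $\binom{n+r}{r}$ of such tuples). -/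
/-- The threshold `c` is a dual certificate for the sum of the `k` largest entries. The bound `b`
is there for the induction: it keeps the threshold of the tail below the head. -/
lemma list_exists_threshold (L : List ℕ) (hL : L.Pairwise (· ≥ ·)) :
    ∀ (k b : ℕ), (∀ x ∈ L, x ≤ b) →
      ∃ c ≤ b, k * c + (L.map (· - c)).sum ≤ (L.take k).sum := by
  induction L with
  | nil => intro k b _; exact ⟨0, by simp⟩
  | cons a L ih =>
    intro k b hb
    rw [List.pairwise_cons] at hL
    cases k with
    | zero =>
      refine ⟨a, hb a (by simp), ?_⟩
      simp only [zero_mul, zero_add, List.take_zero, List.sum_nil, Nat.le_zero]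
      rw [List.sum_eq_zero]
      intro y hy
      rw [List.mem_map] at hy
      obtain ⟨x, hx, rfl⟩ := hy
      rcases List.mem_cons.1 hx with rfl | hx
      · simp
      · have := hL.1 x hx
        omega
    | succ k =>
      obtain ⟨c, hc, h⟩ := ih hL.2 k a hL.1
      refine ⟨c, hc.trans (hb a (by simp)), ?_⟩
      simp only [List.map_cons, List.sum_cons, List.take_succ_cons]
      rw [Nat.succ_mul]
      omega

lemma exists_threshold_s4 (M : Multiset ℕ) (k : ℕ) :
    ∃ c, k * c + (M.map (· - c)).sum ≤ sumLargest M k := by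
  have hp : (M.sort (· ≤ ·)).reverse.Pairwise (· ≥ ·) := by
    rw [List.pairwise_reverse]
    exact M.pairwise_sort (· ≤ ·)
  obtain ⟨c, -, h⟩ := list_exists_threshold _ hp k _ (fun x hx => List.le_sum_of_mem hx)
  refine ⟨c, le_trans (le_of_eq ?_) h⟩
  have hM : M = (((M.sort (· ≤ ·)).reverse : List ℕ) : Multiset ℕ) := by
    rw [Multiset.coe_reverse, Multiset.sort_eq]
  conv_lhs => rw [hM]
  rw [Multiset.map_coe, Multiset.sum_coe]

/-- Members of a chain of finite sets are told apart by their sizes, so listing the sizes in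
increasing order lists the chain itself. -/
lemma card_le_of_chainFree_s4 {α : Type*} {t : ℕ} {F : Set (Finset α)} (hF : ChainFree t F)
    (S : Finset (Finset α)) (hS : ∀ A ∈ S, A ∈ F)
    (hc : ∀ A ∈ S, ∀ B ∈ S, A ⊆ B ∨ B ⊆ A) : S.card ≤ t := by
  classical
  by_contra! hlt
  have hinj : Set.InjOn Finset.card (S : Set (Finset α)) := by
    intro A hA B hB hAB
    rcases hc A hA B hB with h | h
    · exact Finset.eq_of_subset_of_card_le h hAB.ge
    · exact (Finset.eq_of_subset_of_card_le h hAB.le).symm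
  have hT : t + 1 ≤ (S.image Finset.card).card := by
    rw [Finset.card_image_of_injOn hinj]
    exact hlt
  let e := (S.image Finset.card).orderEmbOfCardLe hT
  have he : ∀ i, ∃ A ∈ S, A.card = e i := fun i =>
    Finset.mem_image.1 (Finset.orderEmbOfCardLe_mem _ hT i)
  choose g hgS hge using he
  refine hF ⟨g, ?_, fun i => hS _ (hgS i)⟩
  intro i j hij
  have hlt' : (g i).card < (g j).card := by
    rw [hge, hge]
    exact e.strictMono hij
  rcases hc _ (hgS i) _ (hgS j) with h | h
  · refine Finset.ssubset_iff_subset_ne.2 ⟨h, ?_⟩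
    intro h'
    rw [h'] at hlt'
    exact lt_irrefl _ hlt'
  · exact absurd (Finset.card_le_card h) (not_le.2 hlt')

/-- The colouring encoding a multichain `C`: the colour of `x` is the number of `k` with
`x ∉ C k`. With 0-based indices, colour `j` is the difference `C j \ C (j - 1)`, where the
conventions `C (-1) = ∅` and `C r = univ` apply. -/
def level {n r : ℕ} (C : Fin r → Finset (Fin n)) (x : Fin n) : Fin (r + 1) :=
  ⟨(Finset.univ.filter fun k => x ∉ C k).card,
    Nat.lt_succ_of_le ((Finset.card_le_univ _).trans (by simp))⟩

/-- The sizes of the successive differences of a multichain. -/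
def typeOf {n r : ℕ} (C : Fin r → Finset (Fin n)) (i : Fin (r + 1)) : ℕ :=
  Fintype.card {x // level C x = i}

lemma mem_iff_level {n r : ℕ} {C : Fin r → Finset (Fin n)} (hC : Monotone C) (k : Fin r)
    (x : Fin n) : x ∈ C k ↔ (level C x : ℕ) ≤ k := by
  constructor
  · intro hx
    have : (Finset.univ.filter fun j => x ∉ C j) ⊆ Finset.Iio k := by
      intro j hj
      rw [Finset.mem_filter] at hj
      rw [Finset.mem_Iio]
      by_contra! h
      exact hj.2 (hC h hx)
    simpa [level] using Finset.card_le_card this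
  · intro h
    by_contra hx
    have : Finset.Iic k ⊆ (Finset.univ.filter fun j => x ∉ C j) := by
      intro j hj
      rw [Finset.mem_Iic] at hj
      simp only [Finset.mem_filter, Finset.mem_univ, true_and]
      exact fun h' => hx (hC hj h')
    have := Finset.card_le_card this
    simp only [Fin.card_Iic] at this
    simp only [level] at h
    omega

lemma card_eq_of_typeOf_eq {n r : ℕ} {C D : Fin r → Finset (Fin n)} (hC : Monotone C)
    (hD : Monotone D) (h : typeOf C = typeOf D) (k : Fin r) : (C k).card = (D k).card := by
  have key : ∀ E : Fin r → Finset (Fin n), Monotone E →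
      (E k).card = ∑ i ∈ Finset.univ.filter (fun i : Fin (r + 1) => (i : ℕ) ≤ k), typeOf E i := by
    intro E hE
    rw [Finset.card_eq_sum_card_fiberwise (f := level E)
      (t := Finset.univ.filter (fun i : Fin (r + 1) => (i : ℕ) ≤ k))]
    · refine Finset.sum_congr rfl fun i hi => ?_
      rw [typeOf, Fintype.card_subtype]
      congr 1
      ext x
      simp only [Finset.mem_filter, Finset.mem_univ, true_and] at hi ⊢
      rw [mem_iff_level hE]
      constructor
      · exact fun h => h.2
      · rintro rfl
        exact ⟨hi, rfl⟩
    · intro x hx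
      simpa using (mem_iff_level hE k x).1 hx
  rw [key C hC, key D hD, h]

/-- The members of two multichains lying on a common maximal chain are comparable. -/
lemma comparable_of_monotone {n r : ℕ} {C D : Fin r → Finset (Fin n)} (hC : Monotone C)
    (hD : Monotone D) (σ : Equiv.Perm (Fin n)) (hσC : Monotone (level C ∘ σ))
    (hσD : Monotone (level D ∘ σ)) (k : Fin r) : C k ⊆ D k ∨ D k ⊆ C k := by
  by_contra! h
  obtain ⟨h1, h2⟩ := h
  obtain ⟨x, hxC, hxD⟩ := Finset.not_subset.1 h1
  obtain ⟨y, hyD, hyC⟩ := Finset.not_subset.1 h2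
  rw [mem_iff_level hC] at hxC hyC
  rw [mem_iff_level hD] at hxD hyD
  rcases le_total (σ.symm x) (σ.symm y) with h | h
  · have := hσD h
    simp only [Function.comp, Equiv.apply_symm_apply, Fin.le_def] at this
    omega
  · have := hσC h
    simp only [Function.comp, Equiv.apply_symm_apply, Fin.le_def] at this
    omega

/-- Starting from one permutation sorting the colouring, composition with the colour preserving
permutations gives `∏ i, (a i)!` sorting permutations. -/
lemma prod_factorial_le_card_perm {n r : ℕ} (C : Fin r → Finset (Fin n))
    [DecidablePred fun σ : Equiv.Perm (Fin n) => Monotone (level C ∘ σ)] :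
    ∏ i, (typeOf C i).factorial ≤
      (Finset.univ.filter fun σ : Equiv.Perm (Fin n) => Monotone (level C ∘ σ)).card := by
  classical
  have h := DomMulAct.stabilizer_card (level C)
  simp only [typeOf]
  rw [← h, Fintype.card_subtype]
  refine Finset.card_le_card_of_injOn (fun g => g * Tuple.sort (level C)) ?_ ?_
  · intro g hg
    simp only [Finset.coe_filter, Finset.mem_univ, true_and, Set.mem_ofPred_eq] at hg ⊢
    rw [Equiv.Perm.coe_mul, ← Function.comp_assoc, hg]
    exact Tuple.monotone_sort _
  · intro g _ g' _ hgg
    exact mul_right_cancel hgg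

lemma sum_typeOf {n r : ℕ} (C : Fin r → Finset (Fin n)) : ∑ i, typeOf C i = n := by
  have := Finset.card_eq_sum_card_fiberwise (f := level C) (s := Finset.univ)
    (t := Finset.univ) (fun _ _ => by simp)
  simp only [Finset.card_univ, Fintype.card_fin] at this
  simp only [typeOf, Fintype.card_subtype]
  exact this.symm

/-- Double counting of the pairs (multichain of `𝒟`, permutation through it). -/
lemma sum_prod_factorial_le {n r : ℕ} (𝒟 : Finset (Fin r → Finset (Fin n))) (s : ℕ)
    (h : ∀ σ : Equiv.Perm (Fin n), ∀ ℰ ⊆ 𝒟, (∀ C ∈ ℰ, Monotone (level C ∘ σ)) → ℰ.card ≤ s) :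
    ∑ C ∈ 𝒟, ∏ i, (typeOf C i).factorial ≤ s * n.factorial := by
  classical
  calc ∑ C ∈ 𝒟, ∏ i, (typeOf C i).factorial
      ≤ ∑ C ∈ 𝒟, (Finset.univ.filter fun σ : Equiv.Perm (Fin n) =>
          Monotone (level C ∘ σ)).card :=
        Finset.sum_le_sum fun C _ => prod_factorial_le_card_perm C
    _ = ∑ σ : Equiv.Perm (Fin n), (𝒟.filter fun C => Monotone (level C ∘ σ)).card :=
        Finset.sum_card_bipartiteAbove_eq_sum_card_bipartiteBelow
          (fun (C : Fin r → Finset (Fin n)) (σ : Equiv.Perm (Fin n)) => Monotone (level C ∘ σ))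
    _ ≤ ∑ _σ : Equiv.Perm (Fin n), s := Finset.sum_le_sum fun σ _ =>
        h σ _ (Finset.filter_subset _ _) fun C hC => (Finset.mem_filter.1 hC).2
    _ = s * n.factorial := by
        simp [Finset.card_univ, Fintype.card_perm, mul_comm]

/-- **Theorem (bound on families of `r`-multichains in `B(n)`).**
If `𝒞` is a family of `r`-multichains in `B(n)` such that the `k`-th component
family is `t k`-chain free for each `k`, then `|𝒞| ≤ m₁ + ⋯ + m_τ`, where
`τ = t₁ t₂ ⋯ t_r` and `m₁, …, m_τ` are the `τ` largest multinomial coefficients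
`n choose (a 1, …, a (r+1))` over `(r+1)`-tuples with `∑ a i = n`. -/
theorem card_bound_multichain_boolean (n r : ℕ)
    (t : Fin r → ℕ) (ht : ∀ k, 0 < t k)
    (𝒞 : Finset (Fin r → Finset (Fin n)))
    (hmc : ∀ C ∈ 𝒞, Monotone C)
    (hchain : ∀ k : Fin r, ChainFree (t k) {A | ∃ C ∈ 𝒞, C k = A}) :
    𝒞.card ≤ sumLargest
      ((Finset.Nat.antidiagonalTuple (r + 1) n).val.map
        (fun a => Nat.multinomial Finset.univ a))
      (∏ k, t k) := by
  classical
  obtain ⟨c, hc⟩ := exists_threshold_s4 ((Finset.Nat.antidiagonalTuple (r + 1) n).val.map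
        (fun a => Nat.multinomial Finset.univ a)) (∏ k, t k)
  refine le_trans ?_ hc
  rw [Multiset.map_map]
  change _ ≤ _ + ∑ a ∈ Finset.Nat.antidiagonalTuple (r + 1) n,
    (Nat.multinomial Finset.univ a - c)
  set P := Finset.Nat.antidiagonalTuple (r + 1) n with hP
  have hmaps : ∀ C ∈ 𝒞, typeOf C ∈ P := fun C _ => by
    rw [hP, Finset.Nat.mem_antidiagonalTuple]
    exact sum_typeOf C
  -- `N a` counts the multichains of type `a`; `w a` is `n!` divided by the multinomial coefficient.
  let N : (Fin (r + 1) → ℕ) → ℕ := fun a => (𝒞.filter fun C => typeOf C = a).card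
  let w : (Fin (r + 1) → ℕ) → ℕ := fun a => ∏ i, (a i).factorial
  have hNw : ∀ a, ∑ C ∈ 𝒞.filter (fun C => typeOf C = a), w (typeOf C) = N a * w a := by
    intro a
    rw [Finset.sum_congr rfl (g := fun _ => w a)
      (fun C hC => by rw [(Finset.mem_filter.1 hC).2])]
    simp [N]
  have hcard : 𝒞.card = ∑ a ∈ P, N a := Finset.card_eq_sum_card_fiberwise hmaps
  have hone : ∀ a, N a * w a ≤ n.factorial := by
    intro a
    rw [← hNw a, ← one_mul n.factorial]
    refine sum_prod_factorial_le _ 1 fun σ ℰ hℰ hσ => Finset.card_le_one.2 fun C hC D hD => ?_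
    obtain ⟨hC1, hC2⟩ := Finset.mem_filter.1 (hℰ hC)
    obtain ⟨hD1, hD2⟩ := Finset.mem_filter.1 (hℰ hD)
    funext k
    have hk := card_eq_of_typeOf_eq (hmc C hC1) (hmc D hD1) (hC2.trans hD2.symm) k
    rcases comparable_of_monotone (hmc C hC1) (hmc D hD1) σ (hσ C hC) (hσ D hD) k with h | h
    · exact Finset.eq_of_subset_of_card_le h hk.ge
    · exact (Finset.eq_of_subset_of_card_le h hk.le).symm
  have htot : ∑ a ∈ P, N a * w a ≤ (∏ k, t k) * n.factorial := by
    rw [← Finset.sum_congr rfl (fun a _ => hNw a), Finset.sum_fiberwise_of_maps_to hmaps]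
    refine sum_prod_factorial_le _ _ fun σ ℰ hℰ hσ => ?_
    have hsub : ℰ ⊆ Fintype.piFinset fun k => ℰ.image fun C => C k := by
      intro C hC
      rw [Fintype.mem_piFinset]
      exact fun k => Finset.mem_image_of_mem _ hC
    refine (Finset.card_le_card hsub).trans ?_
    rw [Fintype.card_piFinset]
    refine Finset.prod_le_prod' fun k _ => card_le_of_chainFree_s4 (hchain k) _ ?_ ?_
    · intro A hA
      obtain ⟨C, hC, rfl⟩ := Finset.mem_image.1 hA
      exact ⟨C, hℰ hC, rfl⟩
    · intro A hA B hB
      obtain ⟨C, hC, rfl⟩ := Finset.mem_image.1 hA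
      obtain ⟨D, hD, rfl⟩ := Finset.mem_image.1 hB
      exact comparable_of_monotone (hmc C (hℰ hC)) (hmc D (hℰ hD)) σ (hσ C hC) (hσ D hD) k
  have hspec : ∀ a ∈ P, w a * Nat.multinomial Finset.univ a = n.factorial := by
    intro a ha
    have := Nat.multinomial_spec Finset.univ a
    rwa [Finset.Nat.mem_antidiagonalTuple.1 ha] at this
  rw [hcard]
  refine Nat.le_of_mul_le_mul_right ?_ n.factorial_pos
  calc (∑ a ∈ P, N a) * n.factorial
      = ∑ a ∈ P, N a * w a * Nat.multinomial Finset.univ a := by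
        rw [Finset.sum_mul]
        exact Finset.sum_congr rfl fun a ha => by rw [mul_assoc, hspec a ha]
    _ ≤ ∑ a ∈ P, (N a * w a * c + n.factorial * (Nat.multinomial Finset.univ a - c)) := by
        refine Finset.sum_le_sum fun a _ => ?_
        calc N a * w a * Nat.multinomial Finset.univ a
            ≤ N a * w a * (c + (Nat.multinomial Finset.univ a - c)) :=
              Nat.mul_le_mul_left _ (by omega)
          _ ≤ _ := by
              rw [mul_add]
              exact Nat.add_le_add_left (Nat.mul_le_mul_right _ (hone a)) _
    _ = (∑ a ∈ P, N a * w a) * c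
          + n.factorial * ∑ a ∈ P, (Nat.multinomial Finset.univ a - c) := by
        rw [Finset.sum_add_distrib, Finset.sum_mul, Finset.mul_sum]
    _ ≤ (∏ k, t k) * n.factorial * c
          + n.factorial * ∑ a ∈ P, (Nat.multinomial Finset.univ a - c) :=
        Nat.add_le_add_right (Nat.mul_le_mul_right _ htot) _
    _ = _ := by ring
end

section
/- Let $q$ be a prime power, $\mathbb{F}_q$ the finite field with $q$ elements, and $n$ a positive integer. Let $t_1, \ldots, t_r$ be positive integers and set $\sigma = \frac{t_1 t_2 \cdots t_r}{\max\{t_1,\ldots,t_r\}}$. Let $\mathcal{D}$ be a family of $r$-decompositions of $\mathbb{F}_q^n$ such that for each $k \in \{1,\ldots,r\}$ the family $\mathcal{D}_k$ is $t_k$-chain free. Then $\sum_{(D_1,\ldots,D_r) \in \mathcal{D}} \Big( \genfrac{[}{]}{0pt}{}{n}{\dim D_1,\ldots,\dim D_r}_q \prod_{i<j} q^{\dim(D_i)\dim(D_j)} \Big)^{-1} \le \sigma$. -/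
/-- The `q`-factorial `[m]_q! = (q^m - 1)(q^{m-1} - 1) ⋯ (q - 1)`. -/
def qFact (q m : ℕ) : ℕ := ∏ i ∈ Finset.range m, (q ^ (i + 1) - 1)

/-! ### Consecutive blocks -/

/-- The position at which the block of index `k` starts when blocks of sizes `d j` are laid out
consecutively in increasing order of the priorities `ρ j`. -/
def blockStart {r : ℕ} (ρ : Fin r → ℕ) (d : Fin r → ℕ) (k : Fin r) : ℕ :=
  ∑ j ∈ Finset.univ.filter (fun j => ρ j < ρ k), d j

lemma blockStart_congr {r : ℕ} {ρ d d' : Fin r → ℕ} {k : Fin r}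
    (h : ∀ j, ρ j < ρ k → d j = d' j) : blockStart ρ d k = blockStart ρ d' k := by
  unfold blockStart
  exact Finset.sum_congr rfl fun j hj => h j (Finset.mem_filter.1 hj).2

lemma blockStart_add_le {r : ℕ} {ρ d : Fin r → ℕ} {j k : Fin r} (h : ρ j < ρ k) :
    blockStart ρ d j + d j ≤ blockStart ρ d k := by
  unfold blockStart
  have hj : j ∉ Finset.univ.filter (fun i => ρ i < ρ j) := by simp
  rw [add_comm, ← Finset.sum_insert hj]
  refine Finset.sum_le_sum_of_subset fun i hi => ?_
  simp only [Finset.mem_insert, Finset.mem_filter, Finset.mem_univ, true_and] at hi ⊢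
  rcases hi with rfl | hi
  · exact h
  · omega

lemma blockStart_add_le_sum {r : ℕ} {ρ d : Fin r → ℕ} (k : Fin r) :
    blockStart ρ d k + d k ≤ ∑ j, d j := by
  unfold blockStart
  have hk : k ∉ Finset.univ.filter (fun i => ρ i < ρ k) := by simp
  rw [add_comm, ← Finset.sum_insert hk]
  exact Finset.sum_le_sum_of_subset (Finset.subset_univ _)

/-- Consecutive blocks of sizes `d k` with total size `n` tile `Fin n`. -/
lemma exists_blockEquiv {r n : ℕ} {ρ : Fin r → ℕ} (hρ : Function.Injective ρ) (d : Fin r → ℕ)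
    (hd : ∑ k, d k = n) :
    ∃ e : (Σ k, Fin (d k)) ≃ Fin n,
      ∀ k j, ((e ⟨k, j⟩ : Fin n) : ℕ) = blockStart ρ d k + j := by
  let f : (Σ k, Fin (d k)) → Fin n := fun x =>
    ⟨blockStart ρ d x.1 + x.2, by
      have := blockStart_add_le_sum (ρ := ρ) (d := d) x.1
      have := x.2.2
      omega⟩
  have hf : Function.Injective f := by
    rintro ⟨k, j⟩ ⟨k', j'⟩ h
    have h1 : blockStart ρ d k + j = blockStart ρ d k' + j' := congrArg Fin.val h
    have hk : k = k' := by
      rcases lt_trichotomy (ρ k) (ρ k') with h2 | h2 | h2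
      · have := blockStart_add_le (d := d) h2
        have := j.2
        omega
      · exact hρ h2
      · have := blockStart_add_le (d := d) h2
        have := j'.2
        omega
    subst hk
    have : j = j' := Fin.ext (by omega)
    rw [this]
  have hb : Function.Bijective f :=
    (Fintype.bijective_iff_injective_and_card f).2 ⟨hf, by simp [hd]⟩
  exact ⟨Equiv.ofBijective f hb, fun k j => rfl⟩

/-! ### Counting tuples with bounded branching -/

/-- A set of integer tuples whose coordinate `k` takes at most `t k` values once the coordinates of
smaller priority are fixed has at most `∏ t k` elements. A tuple is encoded by the ranks of its
coordinates among the values still available to them. -/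
lemma card_le_prod_of_branching {r : ℕ} {ρ : Fin r → ℕ} (T : Finset (Fin r → ℕ)) (t : Fin r → ℕ)
    (h : ∀ d ∈ T, ∀ k,
      ((T.filter (fun d' => ∀ j, ρ j < ρ k → d' j = d j)).image (fun d' => d' k)).card ≤ t k) :
    T.card ≤ ∏ k, t k := by
  classical
  let A : (Fin r → ℕ) → Fin r → Finset ℕ := fun d k =>
    (T.filter (fun d' => ∀ j, ρ j < ρ k → d' j = d j)).image (fun d' => d' k)
  have hA : ∀ d ∈ T, ∀ k, d k ∈ A d k := fun d hd k =>
    Finset.mem_image.2 ⟨d, Finset.mem_filter.2 ⟨hd, fun _ _ => rfl⟩, rfl⟩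
  let R : (Fin r → ℕ) → Fin r → ℕ := fun d k => ((A d k).filter (· < d k)).card
  have key : T.card ≤ (Fintype.piFinset (fun k => Finset.range (t k))).card := by
    refine Finset.card_le_card_of_injOn R ?_ ?_
    · intro d hd
      simp only [Finset.mem_coe, Fintype.mem_piFinset, Finset.mem_range]
      intro k
      refine lt_of_lt_of_le (Finset.card_lt_card ?_) (h d hd k)
      exact Finset.filter_ssubset.2 ⟨d k, hA d hd k, by simp⟩
    · intro d hd d' hd' hR
      by_contra hne
      obtain ⟨k1, hk1⟩ := Function.ne_iff.1 hne
      obtain ⟨k, hk, hmin⟩ := Finset.exists_min_image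
        (Finset.univ.filter (fun k => d k ≠ d' k)) ρ ⟨k1, by simpa using hk1⟩
      have hk : d k ≠ d' k := by simpa using hk
      have hagree : ∀ j, ρ j < ρ k → d j = d' j := by
        intro j hj
        by_contra hc
        have := hmin j (by simpa using hc)
        omega
      have hAA : A d k = A d' k := by
        simp only [A]
        congr 1
        refine Finset.filter_congr fun x _ => ?_
        exact forall₂_congr fun j hj => by rw [hagree j hj]
      -- The rank in a fixed finite set of integers is strictly increasing on that set.
      have hlt : ∀ (B : Finset ℕ) (x y : ℕ), x ∈ B → x < y →
          (B.filter (· < x)).card < (B.filter (· < y)).card := by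
        intro B x y hx hxy
        refine Finset.card_lt_card ((Finset.ssubset_iff_of_subset ?_).2 ⟨x, ?_, ?_⟩)
        · intro z hz
          simp only [Finset.mem_filter] at hz ⊢
          exact ⟨hz.1, hz.2.trans hxy⟩
        · simp [hx, hxy]
        · simp
      have hRk : ((A d k).filter (· < d k)).card = ((A d' k).filter (· < d' k)).card :=
        congrFun hR k
      rcases lt_or_gt_of_ne hk with h1 | h1
      · have := hlt (A d k) _ _ (hA d hd k) h1
        rw [hRk, hAA] at this
        exact lt_irrefl _ this
      · have := hlt (A d' k) _ _ (hA d' hd' k) h1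
        rw [← hRk, hAA] at this
        exact lt_irrefl _ this
  simpa [Fintype.card_piFinset] using key

/-! ### Decompositions adapted to an ordered basis -/

section Decompositions

variable {F : Type} [Field F] {r n : ℕ}

/-- The dimensions of the components of a tuple of subspaces. -/
noncomputable def dims (D : Fin r → Submodule F (Fin n → F)) (k : Fin r) : ℕ :=
  Module.finrank F (D k)

/-- The tuple `D` is adapted to the ordered family `b` if every `D k` is spanned by the block of
`dim (D k)` consecutive vectors of `b` assigned to `k`, the blocks being laid out in increasing
order of `ρ`. -/
def Adapted (ρ : Fin r → ℕ) (b : Fin n → (Fin n → F))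
    (D : Fin r → Submodule F (Fin n → F)) : Prop :=
  ∀ k, D k = Submodule.span F (b '' {i | blockStart ρ (dims D) k ≤ i ∧
    (i : ℕ) < blockStart ρ (dims D) k + dims D k})

lemma Adapted.eq_of_dims_eq {ρ : Fin r → ℕ} {b : Fin n → (Fin n → F)}
    {D D' : Fin r → Submodule F (Fin n → F)} (h : Adapted ρ b D) (h' : Adapted ρ b D')
    (hd : dims D = dims D') : D = D' := by
  funext k
  rw [h' k, ← hd]
  exact h k

/-- Components of adapted tuples that start at the same position are nested. -/
lemma Adapted.lt {ρ : Fin r → ℕ} {b : Fin n → (Fin n → F)}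
    {D D' : Fin r → Submodule F (Fin n → F)} (h : Adapted ρ b D) (h' : Adapted ρ b D') {k : Fin r}
    (hpre : ∀ j, ρ j < ρ k → dims D j = dims D' j) (hk : dims D k < dims D' k) :
    D k < D' k := by
  have hle : D k ≤ D' k := by
    rw [h k, h' k, blockStart_congr hpre]
    refine Submodule.span_mono (Set.image_mono ?_)
    rintro i ⟨h1, h2⟩
    exact ⟨h1, by omega⟩
  refine lt_of_le_of_ne hle fun he => ?_
  unfold dims at hk
  rw [he] at hk
  exact lt_irrefl _ hk

/-- At most `∏_{k ≠ k₀} t k` members of the family are adapted to a given `b`, where `k₀` is the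
index whose block comes last: its dimension is determined by the others. -/
lemma card_adapted_le {ρ : Fin r → ℕ} (k₀ : Fin r)
    (hlast : ∀ j, j ≠ k₀ → ρ j < ρ k₀) (t : Fin r → ℕ) (b : Fin n → (Fin n → F))
    (T : Finset (Fin r → Submodule F (Fin n → F))) (hT : ∀ D ∈ T, Adapted ρ b D)
    (hsum : ∀ D ∈ T, ∑ k, dims D k = n)
    (hchain : ∀ k : Fin r, ChainFree (t k) {A | ∃ D ∈ T, D k = A}) :
    T.card ≤ ∏ k, Function.update t k₀ 1 k := by
  classical
  have hinj : Set.InjOn (dims (F := F)) (T : Set (Fin r → Submodule F (Fin n → F))) :=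
    fun D hD D' hD' h => (hT D hD).eq_of_dims_eq (hT D' hD') h
  rw [← Finset.card_image_of_injOn hinj]
  refine card_le_prod_of_branching (ρ := ρ) _ _ ?_
  intro d hd k
  by_cases hk : k = k₀
  · subst hk
    rw [Function.update_self]
    refine Finset.card_le_one.2 ?_
    have hval : ∀ x ∈ ((T.image dims).filter (fun d' => ∀ j, ρ j < ρ k → d' j = d j)).image
        (fun d' => d' k), x + ∑ j ∈ Finset.univ.erase k, d j = n := by
      intro x hx
      simp only [Finset.mem_image, Finset.mem_filter] at hx
      obtain ⟨_, ⟨⟨D, hD, rfl⟩, hag⟩, rfl⟩ := hx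
      refine Eq.trans ?_ (hsum D hD)
      rw [← Finset.add_sum_erase _ _ (Finset.mem_univ k)]
      congr 1
      exact Finset.sum_congr rfl fun j hj => (hag j (hlast j (Finset.ne_of_mem_erase hj))).symm
    intro x hx y hy
    have := hval x hx
    have := hval y hy
    omega
  · rw [Function.update_of_ne hk]
    by_contra hcon
    push Not at hcon
    set A := ((T.image dims).filter (fun d' => ∀ j, ρ j < ρ k → d' j = d j)).image
        (fun d' => d' k) with hAdef
    have hex : ∀ x ∈ A, ∃ D ∈ T, (∀ j, ρ j < ρ k → dims D j = d j) ∧ dims D k = x := by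
      intro x hx
      simp only [hAdef, Finset.mem_image, Finset.mem_filter] at hx
      obtain ⟨_, ⟨⟨D, hD, rfl⟩, hag⟩, hx⟩ := hx
      exact ⟨D, hD, hag, hx⟩
    let f := A.orderEmbOfCardLe (Nat.succ_le_of_lt hcon)
    have hf : ∀ i, f i ∈ A := fun i => A.orderEmbOfCardLe_mem _ i
    choose G hGT hGag hGk using fun i => hex (f i) (hf i)
    refine hchain k ⟨fun i => G i k, ?_, fun i => ⟨G i, hGT i, rfl⟩⟩
    intro i j hij
    refine (hT _ (hGT i)).lt (hT _ (hGT j)) (fun l hl => ?_) ?_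
    · rw [hGag i l hl, hGag j l hl]
    · rw [hGk, hGk]
      exact f.strictMono hij

/-- The number of ordered bases of an `m`-dimensional space over a field with `q` elements. -/
def numBases (q m : ℕ) : ℕ := ∏ i : Fin m, (q ^ m - q ^ (i : ℕ))

/-- Ordered bases of the components of a decomposition concatenate to an ordered basis of the whole
space to which the decomposition is adapted. -/
lemma prod_numBases_le [Fintype F] {ρ : Fin r → ℕ} (hρ : Function.Injective ρ)
    (D : Fin r → Submodule F (Fin n → F)) (hD : DirectSum.IsInternal D)
    (hsum : ∑ k, dims D k = n) :
    ∏ k, numBases (Fintype.card F) (dims D k) ≤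
      Nat.card {b : {b : Fin n → (Fin n → F) // LinearIndependent F b} // Adapted ρ b.1 D} := by
  classical
  obtain ⟨e, he⟩ := exists_blockEquiv hρ (dims D) hsum
  let S : Fin r → Type := fun k => {s : Fin (dims D k) → D k // LinearIndependent F s}
  have hS : ∏ k, numBases (Fintype.card F) (dims D k) = Nat.card (∀ k, S k) := by
    rw [Nat.card_pi]
    refine Finset.prod_congr rfl fun k _ => ?_
    exact (card_linearIndependent (K := F) (V := D k) (k := dims D k) le_rfl).symm
  rw [hS]
  have hspan : ∀ (s : ∀ k, S k) k, Submodule.span F (Set.range (s k).1) = ⊤ := fun s k =>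
    (s k).2.span_eq_top_of_card_eq_finrank' (Fintype.card_fin _)
  let B : (∀ k, S k) → Fin n → (Fin n → F) := fun s i =>
    ((s (e.symm i).1).1 (e.symm i).2 : Fin n → F)
  have hBe : ∀ s k j, B s (e ⟨k, j⟩) = ((s k).1 j : Fin n → F) := by
    intro s k j
    simp only [B]
    rw [Equiv.symm_apply_apply]
  have hli : ∀ s, LinearIndependent F (B s) := by
    intro s
    have h1 := (hD.collectedBasis
      (fun k => Module.Basis.mk (s k).2 (hspan s k).ge)).linearIndependent
    rw [← linearIndependent_equiv e]
    convert h1 using 1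
    funext ⟨k, j⟩
    simp [hBe]
  have had : ∀ s, Adapted ρ (B s) D := by
    intro s k
    have h2 : (B s) '' {i | blockStart ρ (dims D) k ≤ i ∧
        (i : ℕ) < blockStart ρ (dims D) k + dims D k} =
        (D k).subtype '' (Set.range (s k).1) := by
      ext v
      constructor
      · rintro ⟨i, ⟨h3, h4⟩, rfl⟩
        have hi : i = e ⟨k, ⟨i - blockStart ρ (dims D) k, by omega⟩⟩ :=
          Fin.ext (by rw [he]; simp only; omega)
        rw [hi, hBe]
        exact ⟨_, ⟨_, rfl⟩, rfl⟩
      · rintro ⟨_, ⟨j, rfl⟩, rfl⟩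
        refine ⟨e ⟨k, j⟩, ?_, hBe s k j⟩
        have := j.2
        simp only [Set.mem_ofPred_eq, he]
        omega
    rw [h2, Submodule.span_image, hspan s k, Submodule.map_top, Submodule.range_subtype]
  refine Nat.card_le_card_of_injective (fun s => ⟨⟨B s, hli s⟩, had s⟩) ?_
  intro s u h
  have hB : B s = B u := congrArg (fun x => x.1.1) h
  funext k
  refine Subtype.ext (funext fun j => Subtype.ext ?_)
  rw [← hBe s, ← hBe u, hB]

/-- The inequality before normalisation, by double counting pairs of an ordered basis and a
member of the family adapted to it. -/
lemma sum_prod_numBases_le [Fintype F] (k₀ : Fin r) (t : Fin r → ℕ)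
    (𝒟 : Finset (Fin r → Submodule F (Fin n → F)))
    (hdecomp : ∀ D ∈ 𝒟, DirectSum.IsInternal D)
    (hsum : ∀ D ∈ 𝒟, ∑ k, dims D k = n)
    (hchain : ∀ k : Fin r, ChainFree (t k) {A | ∃ D ∈ 𝒟, D k = A}) :
    ∑ D ∈ 𝒟, ∏ k, numBases (Fintype.card F) (dims D k) ≤
      numBases (Fintype.card F) n * ∏ k, Function.update t k₀ 1 k := by
  classical
  let ρ : Fin r → ℕ := fun k => if k = k₀ then r else k
  have hlast : ∀ j, j ≠ k₀ → ρ j < ρ k₀ := fun j hj => by simp [ρ, hj]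
  have hρ : Function.Injective ρ := by
    intro i j h
    simp only [ρ] at h
    have := i.2
    have := j.2
    split_ifs at h with h1 h2 h2
    · rw [h1, h2]
    · omega
    · omega
    · exact Fin.ext h
  let B := {b : Fin n → (Fin n → F) // LinearIndependent F b}
  have hB : Fintype.card B = numBases (Fintype.card F) n := by
    rw [← Nat.card_eq_fintype_card]
    have := card_linearIndependent (K := F) (V := Fin n → F) (k := n) (by simp)
    simpa [numBases] using this
  calc ∑ D ∈ 𝒟, ∏ k, numBases (Fintype.card F) (dims D k)
      ≤ ∑ D ∈ 𝒟, (Finset.univ.filter (fun b : B => Adapted ρ b.1 D)).card := by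
        refine Finset.sum_le_sum fun D hD => ?_
        refine (prod_numBases_le hρ D (hdecomp D hD) (hsum D hD)).trans ?_
        rw [Nat.card_eq_fintype_card, Fintype.card_subtype]
    _ = ∑ b : B, (𝒟.filter (fun D => Adapted ρ b.1 D)).card :=
        (Finset.sum_card_bipartiteAbove_eq_sum_card_bipartiteBelow
          (s := 𝒟) (t := Finset.univ) (fun D (b : B) => Adapted ρ b.1 D))
    _ ≤ ∑ _b : B, ∏ k, Function.update t k₀ 1 k := by
        refine Finset.sum_le_sum fun b _ => ?_
        refine card_adapted_le k₀ hlast t b.1 _ (fun D hD => (Finset.mem_filter.1 hD).2)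
          (fun D hD => hsum D (Finset.mem_filter.1 hD).1) fun k => ?_
        rintro ⟨c, hc, hmem⟩
        refine hchain k ⟨c, hc, fun i => ?_⟩
        obtain ⟨D, hD, h⟩ := hmem i
        exact ⟨D, (Finset.mem_filter.1 hD).1, h⟩
    _ = numBases (Fintype.card F) n * ∏ k, Function.update t k₀ 1 k := by
        rw [Finset.sum_const, Finset.card_univ, hB, smul_eq_mul]

end Decompositions

/-! ### The weight of a decomposition -/

lemma numBases_eq (q m : ℕ) : numBases q m = q ^ (m.choose 2) * qFact q m := by
  have h1 : numBases q m = ∏ i ∈ Finset.range m, q ^ i * (q ^ (m - i) - 1) := by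
    unfold numBases
    rw [Finset.prod_range]
    refine Finset.prod_congr rfl fun i _ => ?_
    rw [Nat.mul_sub, ← pow_add, Nat.add_sub_cancel' i.2.le, mul_one]
  rw [h1, Finset.prod_mul_distrib, Finset.prod_pow_eq_pow_sum, Finset.sum_range_id,
    Nat.choose_two_right]
  congr 1
  unfold qFact
  rw [← Finset.prod_range_reflect]
  refine Finset.prod_congr rfl fun i hi => ?_
  have := Finset.mem_range.1 hi
  congr 2
  omega

lemma choose_two_sum {r : ℕ} (d : Fin r → ℕ) :
    (∑ k, d k).choose 2 = ∑ k, (d k).choose 2 +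
      ∑ p ∈ Finset.univ.filter (fun p : Fin r × Fin r => p.1 < p.2), d p.1 * d p.2 := by
  have hsq : (∑ k, (d k : ℚ)) ^ 2 = ∑ k, (d k : ℚ) ^ 2 + 2 *
      ∑ p ∈ Finset.univ.filter (fun p : Fin r × Fin r => p.1 < p.2), (d p.1 : ℚ) * d p.2 := by
    have hswap : ∑ p ∈ Finset.univ.filter (fun p : Fin r × Fin r => p.2 < p.1),
        (d p.1 : ℚ) * d p.2 =
        ∑ p ∈ Finset.univ.filter (fun p : Fin r × Fin r => p.1 < p.2), (d p.1 : ℚ) * d p.2 := by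
      refine Finset.sum_equiv (Equiv.prodComm _ _) (by simp) (fun p _ => ?_)
      simp [mul_comm]
    have hdiag : ∑ k, (d k : ℚ) ^ 2 = ∑ p : Fin r × Fin r,
        if p.1 = p.2 then (d p.1 : ℚ) * d p.2 else 0 := by
      rw [Fintype.sum_prod_type]
      simp [sq]
    rw [two_mul]
    nth_rewrite 1 [← hswap]
    rw [hdiag, Finset.sum_filter, Finset.sum_filter, ← Finset.sum_add_distrib,
      ← Finset.sum_add_distrib, sq, Finset.sum_mul_sum, ← Fintype.sum_prod_type']
    refine Finset.sum_congr rfl fun p _ => ?_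
    rcases lt_trichotomy p.1 p.2 with h | h | h
    · simp [h, h.ne, h.not_gt]
    · simp [h]
    · simp [h, h.ne', h.not_gt]
  have : ((∑ k, d k).choose 2 : ℚ) = ((∑ k, (d k).choose 2 +
      ∑ p ∈ Finset.univ.filter (fun p : Fin r × Fin r => p.1 < p.2), d p.1 * d p.2 : ℕ) : ℚ) := by
    push_cast [Nat.cast_choose_two]
    have h2 : ∑ k, (d k : ℚ) * (d k - 1) / 2 = (∑ k, (d k : ℚ) ^ 2 - ∑ k, (d k : ℚ)) / 2 := by
      rw [← Finset.sum_sub_distrib, Finset.sum_div]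
      exact Finset.sum_congr rfl fun k _ => by ring
    rw [h2]
    linarith
  exact_mod_cast this

lemma qFact_pos {q : ℕ} (hq : 1 < q) (m : ℕ) : 0 < qFact q m :=
  Finset.prod_pos fun i _ => Nat.sub_pos_of_lt (Nat.one_lt_pow (by omega) hq)

/-- The weight of a decomposition is the proportion of ordered bases of the whole space that are
concatenations of ordered bases of its components. -/
lemma weight_eq {q n r : ℕ} (hq : 1 < q) (d : Fin r → ℕ) (hd : ∑ k, d k = n) :
    (1 : ℝ) / (((qFact q n : ℝ) / ∏ i, (qFact q (d i) : ℝ)) *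
      ∏ p ∈ Finset.univ.filter (fun p : Fin r × Fin r => p.1 < p.2), (q : ℝ) ^ (d p.1 * d p.2)) =
    ((∏ k, numBases q (d k) : ℕ) : ℝ) / (numBases q n : ℝ) := by
  have hq0 : (q : ℝ) ≠ 0 := by exact_mod_cast (by omega : q ≠ 0)
  have hn0 : (qFact q n : ℝ) ≠ 0 := by exact_mod_cast (qFact_pos hq n).ne'
  have hp0 : ∏ i, (qFact q (d i) : ℝ) ≠ 0 :=
    Finset.prod_ne_zero_iff.2 fun i _ => by exact_mod_cast (qFact_pos hq (d i)).ne'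
  subst hd
  simp only [numBases_eq, choose_two_sum d]
  push_cast
  rw [Finset.prod_mul_distrib, Finset.prod_pow_eq_pow_sum, Finset.prod_pow_eq_pow_sum, pow_add]
  field_simp

/-- **Theorem (generalized LYM inequality for `r`-decompositions of `𝔽_q^n`).**
If `𝒟` is a family of `r`-decompositions of `𝔽_q^n` (tuples of subspaces whose
internal direct sum is the whole space) such that the `k`-th component family is
`t k`-chain free for each `k`, then
`∑_{D ∈ 𝒟} 1 / ([n; dim D₁, …, dim D_r]_q ∏_{i<j} q^{dim Dᵢ · dim Dⱼ})
  ≤ (∏ t k) / max t k`. -/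
theorem lym_decomposition_q (q n r : ℕ) (hq : IsPrimePow q) (hn : 0 < n) (hr : 0 < r)
    (F : Type) [Field F] [Fintype F] (hF : Fintype.card F = q)
    (t : Fin r → ℕ) (ht : ∀ k, 0 < t k)
    (𝒟 : Finset (Fin r → Submodule F (Fin n → F)))
    (hdecomp : ∀ D ∈ 𝒟, DirectSum.IsInternal D)
    (hchain : ∀ k : Fin r, ChainFree (t k) {A | ∃ D ∈ 𝒟, D k = A}) :
    ∑ D ∈ 𝒟, (1 : ℝ) /
        (((qFact q n : ℝ) / ∏ i, (qFact q (Module.finrank F (D i)) : ℝ)) *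
          ∏ p ∈ Finset.univ.filter (fun p : Fin r × Fin r => p.1 < p.2),
            (q : ℝ) ^ (Module.finrank F (D p.1) * Module.finrank F (D p.2))) ≤
      (∏ k, (t k : ℝ)) / ((Finset.univ.sup t : ℕ) : ℝ) := by
  classical
  have hq1 : 1 < q := hq.one_lt
  have hsum : ∀ D ∈ 𝒟, ∑ k, dims D k = n := by
    intro D hD
    have h := LinearEquiv.finrank_eq (LinearEquiv.ofBijective (DirectSum.coeLinearMap D) (hdecomp D hD))
    rw [Module.finrank_directSum] at h
    simpa [dims] using h
  obtain ⟨k₀, -, hk₀⟩ := Finset.exists_mem_eq_sup Finset.univ ⟨⟨0, hr⟩, Finset.mem_univ _⟩ t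
  have hmain := sum_prod_numBases_le k₀ t 𝒟 hdecomp hsum hchain
  rw [hF] at hmain
  have hbpos : 0 < numBases q n := by
    rw [numBases_eq]
    exact Nat.mul_pos (Nat.pow_pos (by omega)) (qFact_pos hq1 n)
  have hprod : ∏ k, t k = t k₀ * ∏ k, Function.update t k₀ 1 k := by
    rw [Finset.prod_update_of_mem (Finset.mem_univ k₀), one_mul, ← Finset.erase_eq,
      Finset.mul_prod_erase _ _ (Finset.mem_univ k₀)]
  have ht0 : (t k₀ : ℝ) ≠ 0 := by exact_mod_cast (ht k₀).ne'
  have hrhs : (∏ k, (t k : ℝ)) / ((Finset.univ.sup t : ℕ) : ℝ) =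
      ((∏ k, Function.update t k₀ 1 k : ℕ) : ℝ) := by
    rw [hk₀, ← Nat.cast_prod, hprod, Nat.cast_mul, mul_div_cancel_left₀ _ ht0]
  rw [hrhs]
  refine (Finset.sum_congr rfl fun D hD => weight_eq hq1 (dims D) (hsum D hD)).trans_le ?_
  rw [← Finset.sum_div, div_le_iff₀ (by exact_mod_cast hbpos), mul_comm]
  exact_mod_cast hmain
end

section
/- Let $q$ be a prime power, $\mathbb{F}_q$ the finite field with $q$ elements, and $n$ a positive integer. Let $t_1, \ldots, t_r$ be positive integers and set $\tau = t_1 t_2 \cdots t_r$. Let $\mathcal{C}$ be a family of $r$-multichains in the subspace lattice $L_q(n)$ of $\mathbb{F}_q^n$ such that for each $k \in \{1,\ldots,r\}$ the family $\mathcal{C}_k$ is $t_k$-chain free. Then $\sum_{(C_1,\ldots,C_r) \in \mathcal{C}} \genfrac{[}{]}{0pt}{}{n}{\dim C_1,\; \dim C_2 - \dim C_1,\; \ldots,\; \dim C_r - \dim C_{r-1},\; n - \dim C_r}_q^{-1} \le \tau$. -/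
/-- For an `r`-multichain `C₁ ⊆ ⋯ ⊆ C_r` of subspaces of `F^n`, the `(r+1)`-tuple
of successive dimension differences
`(dim C₁, dim C₂ - dim C₁, …, dim C_r - dim C_{r-1}, n - dim C_r)`. -/
noncomputable def chainDims (F : Type*) [Field F] (n r : ℕ)
    (C : Fin r → Submodule F (Fin n → F)) (i : Fin (r + 1)) : ℕ :=
  (if h : (i : ℕ) < r then Module.finrank F (C ⟨i, h⟩) else n) -
    (if h : 0 < (i : ℕ) then
      Module.finrank F (C ⟨(i : ℕ) - 1, by have := i.isLt; omega⟩) else 0)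

/-! ### Counting independent tuples in prescribed subspaces -/

/-- Linearly independent `m`-tuples whose `i`-th vector lies in the prescribed subspace `W i`. -/
def IndepTuple (F : Type*) {V : Type*} [Field F] [AddCommGroup V] [Module F V]
    (W : ℕ → Submodule F V) (m : ℕ) : Set (Fin m → V) :=
  {v | LinearIndependent F v ∧ ∀ i : Fin m, v i ∈ W i}

/-- Splitting off the last vector of a tuple. -/
def indepTupleSuccEquiv {F V : Type*} [Field F] [AddCommGroup V] [Module F V]
    (W : ℕ → Submodule F V) (m : ℕ) :
    IndepTuple F W (m + 1) ≃
      Σ v : IndepTuple F W m,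
        {x : V // x ∈ (W m : Set V) \ (Submodule.span F (Set.range v.1) : Set V)} where
  toFun v := ⟨⟨Fin.init v.1, by
      have h := v.2.1
      rw [← Fin.snoc_init_self v.1, linearIndependent_finSnoc] at h
      exact ⟨h.1, fun i => by simpa [Fin.init] using v.2.2 i.castSucc⟩⟩,
    ⟨v.1 (Fin.last m), by
      have h := v.2.1
      rw [← Fin.snoc_init_self v.1, linearIndependent_finSnoc] at h
      exact ⟨by simpa using v.2.2 (Fin.last m), by simpa using h.2⟩⟩⟩
  invFun p := ⟨Fin.snoc (α := fun _ => V) p.1.1 p.2.1, by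
      refine ⟨linearIndependent_finSnoc.2 ⟨p.1.2.1, p.2.2.2⟩, fun i => ?_⟩
      induction i using Fin.lastCases with
      | last => simpa using p.2.2.1
      | cast i => simpa using p.1.2.2 i⟩
  left_inv v := by
    apply Subtype.ext
    exact Fin.snoc_init_self v.1
  right_inv p := by
    obtain ⟨⟨v, hv⟩, ⟨x, hx⟩⟩ := p
    ext <;> simp

theorem card_indepTuple {F V : Type*} [Field F] [Fintype F] [AddCommGroup V] [Module F V]
    [Finite V] (W : ℕ → Submodule F V) (hW : Monotone W) (m : ℕ) :
    Nat.card (IndepTuple F W m) =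
      ∏ i ∈ Finset.range m,
        (Fintype.card F ^ Module.finrank F (W i) - Fintype.card F ^ i) := by
  classical
  have := Fintype.ofFinite V
  induction m with
  | zero =>
    rw [Finset.range_zero, Finset.prod_empty, Nat.card_eq_one_iff_unique]
    exact ⟨inferInstance, ⟨⟨Fin.elim0, linearIndependent_empty_type, fun i => i.elim0⟩⟩⟩
  | succ m ih =>
    have := Fintype.ofFinite (IndepTuple F W m)
    rw [Nat.card_congr (indepTupleSuccEquiv W m), Nat.card_sigma, Finset.prod_range_succ, ← ih]
    rw [Finset.sum_congr rfl (g := fun _ => Fintype.card F ^ Module.finrank F (W m)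
      - Fintype.card F ^ m)]
    · simp [Nat.card_eq_fintype_card]
    · rintro ⟨v, hv⟩ -
      have hle : Submodule.span F (Set.range v) ≤ W m := by
        rw [Submodule.span_le]
        rintro _ ⟨i, rfl⟩
        exact hW i.2.le (hv.2 i)
      have h := Set.ncard_sdiff (s := (Submodule.span F (Set.range v) : Set V))
        (t := (W m : Set V)) hle
      have h1 : ∀ S : Submodule F V, (S : Set V).ncard =
          Fintype.card F ^ Module.finrank F S := fun S => by
        rw [← Nat.card_coe_set_eq, ← Nat.card_eq_fintype_card]
        exact Module.natCard_eq_pow_finrank (K := F) (V := S)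
      rw [h1, h1, finrank_span_eq_card hv.1, Fintype.card_fin] at h
      rw [← h, ← Nat.card_coe_set_eq]

/-! ### Bases adapted to a multichain -/

section Adapted

variable {F : Type} [Field F] {n r : ℕ}

/-- The intersection of the `C k` of dimension greater than `i`: for a multichain `C` the smallest
such `C k`, and `⊤` if there is none. A basis `v` is adapted to `C` when `v i ∈ flagBound C i` for all `i`. -/
def flagBound (C : Fin r → Submodule F (Fin n → F)) (i : ℕ) : Submodule F (Fin n → F) :=
  ⨅ k : {k : Fin r // i < Module.finrank F (C k)}, C k

theorem flagBound_mono (C : Fin r → Submodule F (Fin n → F)) : Monotone (flagBound C) := by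
  intro i j hij
  exact le_iInf fun k => iInf_le_of_le ⟨k.1, hij.trans_lt k.2⟩ le_rfl

/-- The dimensions `0, dim C₁, …, dim C_r, n, n, …` bounding the blocks of `chainDims`. -/
noncomputable def dimBreak (C : Fin r → Submodule F (Fin n → F)) : ℕ → ℕ
  | 0 => 0
  | j + 1 => if h : j < r then Module.finrank F (C ⟨j, h⟩) else n

theorem dimBreak_mono (C : Fin r → Submodule F (Fin n → F)) (hC : Monotone C) :
    Monotone (dimBreak C) := by
  refine monotone_nat_of_le_succ fun j => ?_
  cases j with
  | zero => exact Nat.zero_le _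
  | succ j =>
    simp only [dimBreak]
    split_ifs with h1 h2 h2
    · exact Submodule.finrank_mono (hC (by simp))
    · simpa using Submodule.finrank_le (C ⟨j, h1⟩)
    · omega
    · exact le_rfl

theorem chainDims_eq (C : Fin r → Submodule F (Fin n → F)) (j : Fin (r + 1)) :
    chainDims F n r C j = dimBreak C (j + 1) - dimBreak C j := by
  obtain ⟨j, hj⟩ := j
  cases j with
  | zero => simp [chainDims, dimBreak]
  | succ j =>
    have : j < r := by omega
    simp [chainDims, dimBreak, this]

theorem finrank_flagBound (C : Fin r → Submodule F (Fin n → F)) (hC : Monotone C) {j i : ℕ}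
    (hj : j ≤ r) (h1 : dimBreak C j ≤ i) (h2 : i < dimBreak C (j + 1)) :
    Module.finrank F (flagBound C i) = dimBreak C (j + 1) := by
  have key : ∀ k : Fin r, i < Module.finrank F (C k) → j ≤ k := by
    intro k hk
    by_contra! hlt
    have h3 := dimBreak_mono C hC (show (k : ℕ) + 1 ≤ j from hlt)
    simp only [dimBreak, k.2, dif_pos] at h3
    exact absurd hk (by simpa using h3.trans h1)
  by_cases h : j < r
  · simp only [dimBreak, h, dif_pos] at h2 ⊢
    have : flagBound C i = C ⟨j, h⟩ := by
      apply le_antisymm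
      · exact iInf_le_of_le ⟨⟨j, h⟩, h2⟩ le_rfl
      · exact le_iInf fun k => hC (key k.1 k.2)
    rw [this]
  · have : flagBound C i = ⊤ := by
      rw [eq_top_iff]
      refine le_iInf fun k => ?_
      have := key k.1 k.2
      have := k.1.2
      omega
    rw [this]
    simp [dimBreak, h]

theorem prod_Ico_qFact (q a b : ℕ) (hab : a ≤ b) :
    ∏ i ∈ Finset.Ico a b, (q ^ (b - i) - 1) = qFact q (b - a) := by
  rw [Finset.prod_Ico_eq_prod_range, qFact, ← Finset.prod_range_reflect]
  refine Finset.prod_congr rfl fun i hi => ?_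
  rw [Finset.mem_range] at hi
  congr 2
  omega

theorem prod_pow_sub (q : ℕ) (hq : 1 ≤ q) (m : ℕ) (d : ℕ → ℕ) :
    ∏ i ∈ Finset.range m, (q ^ d i - q ^ i) =
      (∏ i ∈ Finset.range m, q ^ i) * ∏ i ∈ Finset.range m, (q ^ (d i - i) - 1) := by
  rw [← Finset.prod_mul_distrib]
  refine Finset.prod_congr rfl fun i _ => ?_
  rcases le_total i (d i) with h | h
  · rw [Nat.mul_sub, ← pow_add, Nat.add_sub_cancel' h, mul_one]
  · rw [Nat.sub_eq_zero_of_le h, Nat.sub_eq_zero_of_le (Nat.pow_le_pow_right hq h)]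
    simp

/-- Up to the power of `q`, the number of bases adapted to `C` is the denominator of the Gaussian
multinomial coefficient. -/
theorem prod_dim_flagBound (q : ℕ) (C : Fin r → Submodule F (Fin n → F)) (hC : Monotone C) :
    ∏ i ∈ Finset.range n, (q ^ (Module.finrank F (flagBound C i) - i) - 1) =
      ∏ j, qFact q (chainDims F n r C j) := by
  have hmono := dimBreak_mono C hC
  have aux : ∀ s ≤ r + 1, ∏ i ∈ Finset.range (dimBreak C s),
      (q ^ (Module.finrank F (flagBound C i) - i) - 1) =
      ∏ j ∈ Finset.range s, qFact q (dimBreak C (j + 1) - dimBreak C j) := by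
    intro s
    induction s with
    | zero => simp [dimBreak]
    | succ s ih =>
      intro hs
      rw [Finset.prod_range_succ, ← ih (by omega), ← prod_Ico_qFact _ _ _ (hmono s.le_succ),
        ← Finset.prod_range_mul_prod_Ico _ (hmono s.le_succ)]
      congr 1
      refine Finset.prod_congr rfl fun i hi => ?_
      rw [Finset.mem_Ico] at hi
      rw [finrank_flagBound C hC (by omega) hi.1 hi.2]
  have h := aux (r + 1) le_rfl
  rw [show dimBreak C (r + 1) = n by simp [dimBreak]] at h
  rw [h, ← Fin.prod_univ_eq_prod_range]
  simp only [chainDims_eq]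

/-! ### The flag of a basis -/

/-- The `j`-th member of the flag generated by `v`, spanned by the first `j` vectors; it has
dimension `j` when `v` is a basis and `j ≤ n`. -/
def flagSpan (v : Fin n → Fin n → F) (j : ℕ) : Submodule F (Fin n → F) :=
  Submodule.span F (v '' {i | (i : ℕ) < j})

theorem finrank_flagSpan {v : Fin n → Fin n → F} (hv : LinearIndependent F v) {j : ℕ}
    (hj : j ≤ n) : Module.finrank F (flagSpan v j) = j := by
  classical
  have h : v '' {i | (i : ℕ) < j} = Set.range (v ∘ Fin.castLE hj) := by
    ext x
    constructor
    · rintro ⟨i, hi, rfl⟩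
      exact ⟨⟨i, hi⟩, rfl⟩
    · rintro ⟨i, rfl⟩
      exact ⟨_, i.2, rfl⟩
  rw [flagSpan, h, finrank_span_eq_card (hv.comp _ (Fin.castLE_injective hj)), Fintype.card_fin]

theorem flagSpan_strictMonoOn {v : Fin n → Fin n → F} (hv : LinearIndependent F v) :
    StrictMonoOn (flagSpan v) (Set.Iic n) := by
  intro i hi j hj hij
  refine lt_of_le_of_ne ?_ fun h => ?_
  · exact Submodule.span_mono (Set.image_mono fun k hk => lt_trans hk hij)
  · have := congrArg (fun S : Submodule F (Fin n → F) => Module.finrank F S) h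
    simp only [finrank_flagSpan hv hi, finrank_flagSpan hv hj] at this
    omega

theorem eq_flagSpan_of_adapted {C : Fin r → Submodule F (Fin n → F)} {v : Fin n → Fin n → F}
    (hv : v ∈ IndepTuple F (flagBound C) n) (k : Fin r) :
    C k = flagSpan v (Module.finrank F (C k)) := by
  symm
  apply Submodule.eq_of_le_of_finrank_eq
  · rw [flagSpan, Submodule.span_le]
    rintro _ ⟨i, hi, rfl⟩
    have := hv.2 i
    rw [flagBound, Submodule.mem_iInf] at this
    exact this ⟨k, hi⟩
  · exact finrank_flagSpan hv.1 (by simpa using Submodule.finrank_le (C k))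

open Classical in
/-- A basis is adapted to few members of `𝒞`: an adapted `C` is determined by its dimensions, and
the flag of `v` meets the `k`-th component family in at most `t k` subspaces. -/
theorem card_adapted_le_s7 (t : Fin r → ℕ) (𝒞 : Finset (Fin r → Submodule F (Fin n → F)))
    (hchain : ∀ k : Fin r, ChainFree (t k) {A | ∃ C ∈ 𝒞, C k = A})
    {v : Fin n → Fin n → F} (hv : LinearIndependent F v) :
    (𝒞.filter fun C => v ∈ IndepTuple F (flagBound C) n).card ≤ ∏ k, t k := by
  -- the dimensions at which the flag of `v` meets the `k`-th component family
  let S : Fin r → Finset ℕ := fun k =>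
    (Finset.range (n + 1)).filter fun j => ∃ C ∈ 𝒞, C k = flagSpan v j
  have hS : ∀ k, (S k).card ≤ t k := by
    intro k
    by_contra! hlt
    obtain ⟨U, hU, hcard⟩ := Finset.exists_subset_card_eq (Nat.succ_le_of_lt hlt)
    have hmem : ∀ i, U.orderEmbOfFin hcard i ∈ S k := fun i =>
      hU (Finset.orderEmbOfFin_mem U hcard i)
    refine hchain k ⟨fun i => flagSpan v (U.orderEmbOfFin hcard i), fun i j hij => ?_,
      fun i => (Finset.mem_filter.1 (hmem i)).2⟩
    have hle : ∀ i, U.orderEmbOfFin hcard i ∈ Set.Iic n := fun i =>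
      Nat.lt_succ_iff.1 (Finset.mem_range.1 (Finset.mem_filter.1 (hmem i)).1)
    exact flagSpan_strictMonoOn hv (hle i) (hle j) ((U.orderEmbOfFin hcard).strictMono hij)
  calc _ ≤ (Fintype.piFinset S).card := by
        refine Finset.card_le_card_of_injOn (fun C k => Module.finrank F (C k)) ?_ ?_
        · intro C hC
          rw [Finset.mem_coe, Finset.mem_filter] at hC
          rw [Finset.mem_coe, Fintype.mem_piFinset]
          intro k
          refine Finset.mem_filter.2 ⟨Finset.mem_range.2 (Nat.lt_succ_iff.2 ?_), C, hC.1,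
            eq_flagSpan_of_adapted hC.2 k⟩
          simpa using Submodule.finrank_le (C k)
        · intro C hC D hD hCD
          rw [Finset.mem_coe, Finset.mem_filter] at hC hD
          funext k
          rw [eq_flagSpan_of_adapted hC.2 k, eq_flagSpan_of_adapted hD.2 k]
          exact congrArg _ (congrFun hCD k)
    _ = ∏ k, (S k).card := Fintype.card_piFinset S
    _ ≤ ∏ k, t k := Finset.prod_le_prod' fun k _ => hS k

end Adapted

/-! ### Double counting -/

/-- **Theorem (generalized LYM inequality for `r`-multichains in `L_q(n)`).**
If `𝒞` is a family of `r`-multichains of subspaces of `𝔽_q^n` such that the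
`k`-th component family is `t k`-chain free for each `k`, then
`∑_{C ∈ 𝒞} 1 / [n; dim C₁, dim C₂ - dim C₁, …, n - dim C_r]_q ≤ t₁ ⋯ t_r`. -/
theorem lym_multichain_q (q n r : ℕ) (hq : IsPrimePow q) (hn : 0 < n)
    (F : Type) [Field F] [Fintype F] (hF : Fintype.card F = q)
    (t : Fin r → ℕ) (ht : ∀ k, 0 < t k)
    (𝒞 : Finset (Fin r → Submodule F (Fin n → F)))
    (hmc : ∀ C ∈ 𝒞, Monotone C)
    (hchain : ∀ k : Fin r, ChainFree (t k) {A | ∃ C ∈ 𝒞, C k = A}) :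
    ∑ C ∈ 𝒞, (1 : ℝ) /
        ((qFact q n : ℝ) / ∏ i, (qFact q (chainDims F n r C i) : ℝ)) ≤
      ∏ k, (t k : ℝ) := by
  classical
  have hq1 : 1 < q := hq.one_lt
  let P : ℕ := ∏ i ∈ Finset.range n, q ^ i
  have hP : 0 < P := Finset.prod_pos fun i _ => pow_pos (by omega) _
  have hQ : 0 < qFact q n := Finset.prod_pos fun i _ =>
    Nat.sub_pos_of_lt (Nat.one_lt_pow (by omega) hq1)
  -- the set of all ordered bases, and the set of those adapted to `C`
  let B : Finset (Fin n → Fin n → F) := Finset.univ.filter fun v => LinearIndependent F v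
  let A : (Fin r → Submodule F (Fin n → F)) → Finset (Fin n → Fin n → F) := fun C =>
    B.filter fun v => v ∈ IndepTuple F (flagBound C) n
  have hB : B.card = P * qFact q n := by
    have h := card_indepTuple (fun _ => (⊤ : Submodule F (Fin n → F))) monotone_const n
    rw [hF, prod_pow_sub q hq1.le n] at h
    simp only [finrank_top, Module.finrank_fin_fun] at h
    rw [Finset.range_eq_Ico, prod_Ico_qFact q 0 n (Nat.zero_le n), Nat.sub_zero,
      ← Finset.range_eq_Ico] at h
    rw [← h, Nat.card_coe_set_eq, ← Set.ncard_coe_finset]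
    congr 1
    ext v
    simp [B, IndepTuple]
  have hA : ∀ C ∈ 𝒞, (A C).card = P * ∏ i, qFact q (chainDims F n r C i) := by
    intro C hC
    have h := card_indepTuple (flagBound C) (flagBound_mono C) n
    rw [hF, prod_pow_sub q hq1.le n, prod_dim_flagBound q C (hmc C hC)] at h
    rw [← h, Nat.card_coe_set_eq, ← Set.ncard_coe_finset]
    congr 1
    ext v
    simp only [A, B, Finset.coe_filter, Finset.mem_filter, Finset.mem_univ, true_and,
      Set.mem_ofPred_eq, and_iff_right_iff_imp]
    exact fun h => h.1
  have hcount : ∑ C ∈ 𝒞, (A C).card ≤ B.card * ∏ k, t k := by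
    have hswap := Finset.sum_card_bipartiteAbove_eq_sum_card_bipartiteBelow (s := 𝒞) (t := B)
      (fun C v => v ∈ IndepTuple F (flagBound C) n)
    calc ∑ C ∈ 𝒞, (A C).card
        = ∑ v ∈ B, (𝒞.filter fun C => v ∈ IndepTuple F (flagBound C) n).card := hswap
      _ ≤ B.card • ∏ k, t k := Finset.sum_le_card_nsmul _ _ _ fun v hv =>
          card_adapted_le_s7 t 𝒞 hchain (Finset.mem_filter.1 hv).2
  rw [Finset.sum_congr rfl hA, hB, ← Finset.mul_sum, mul_assoc] at hcount
  have hcount' : ((∑ C ∈ 𝒞, ∏ i, qFact q (chainDims F n r C i) : ℕ) : ℝ) ≤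
      ((qFact q n * ∏ k, t k : ℕ) : ℝ) := by
    exact_mod_cast Nat.le_of_mul_le_mul_left hcount hP
  push_cast at hcount'
  simp only [one_div_div]
  rw [← Finset.sum_div, div_le_iff₀ (by exact_mod_cast hQ), mul_comm]
  exact hcount'
end

section
/- Let $n$ be a positive integer and let $\mathcal{A}$ be a $t$-chain free family of positive divisors of $n$. Then $\sum_{x \in \mathcal{A}} 1 / W_{\mathrm{rk}(x)}(n) \le t$, where $\mathrm{rk}(x)$ is the number of prime factors of $x$ counted with multiplicity and $W_i(n)$ is the number of divisors of $n$ with exactly $i$ prime factors counted with multiplicity. -/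
/-!
Call a function on `Div(n)` monotone if it is monotone for divisibility. The proof rests on the
normalized matching property in its functional form (`NormMatch`): the average of a monotone
function over the divisors of rank `i` is nondecreasing in `i`.

Normalized matching is proved together with log-concavity of the level sizes, by adding one prime
power at a time. If `p ∤ m`, the divisors of `p ^ k * m` of rank `a` are the `p ^ j * x` with
`j ≤ k` and `x` a divisor of `m` of rank `a - j`, so the new level sizes are sums of `k + 1`
consecutive old ones, and these are again log-concave (`LogConc.winSum`). Averaging a monotone
function over `x` turns it into a monotone function of `(a, j)`, and the levels `i` and `i + 1`
become two weighted paths indexed by `j`. The mass of the first is transported onto the second by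
steps `j → j` (raise the rank of `x`) and `j → j + 1` (multiply by `p`) in `transport_le`;
log-concavity makes the flows along `j → j + 1` nonnegative, and those along `j → j` always are.

For the inequality itself, let `h x` be the largest size of a chain in `𝒜` whose members divide
`x`, and `h' x` the same with members different from `x`. Then `h' + 1_𝒜 ≤ h ≤ t`, and
`h x ≤ h' y` whenever `x` properly divides `y`. Hence the function that is `h` on ranks `≤ i` and
`h'` on ranks `> i` is monotone, and the average of `h` over level `i` is at most that of `h'` over
level `i + 1`. Summing the averages of `h - h'` over all levels telescopes to at most the average
of `h` over the top level, which is at most `t`.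
-/

/-- The rank of a positive integer: the number of prime factors counted with
multiplicity. -/
def rk (x : ℕ) : ℕ := x.primeFactorsList.length

/-- `W n i` is the number of divisors of `n` with exactly `i` prime factors
counted with multiplicity. -/
def W (n i : ℕ) : ℕ := (n.divisors.filter (fun x => rk x = i)).card

/-- A family `S` of positive integers is `t`-chain free (with respect to
divisibility) if it contains no `t + 1` distinct members totally ordered by
divisibility. -/
def DvdChainFree (t : ℕ) (S : Set ℕ) : Prop :=
  ¬ ∃ c : Fin (t + 1) → ℕ, (∀ i, c i ∈ S) ∧
    ∀ i j : Fin (t + 1), i < j → c i ∣ c j ∧ c i ≠ c j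

/-! ### Levels, log-concavity, normalized matching -/

/-- The divisors of `n` of rank `a`; the rank is an integer, so that levels of negative rank
are available and empty. -/
def lev (n : ℕ) (a : ℤ) : Finset ℕ := n.divisors.filter (fun x => (rk x : ℤ) = a)

/-- The sum of `g` over the divisors of `n` of rank `a`. -/
def levSum (n : ℕ) (g : ℕ → ℝ) (a : ℤ) : ℝ := ∑ x ∈ lev n a, g x

/-- The number of divisors of `n` of rank `a`, as a real number. -/
def levCard (n : ℕ) (a : ℤ) : ℝ := ((lev n a).card : ℝ)

/-- Log-concavity without internal zeros, for a sequence indexed by `ℤ`. -/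
def LogConc (w : ℤ → ℝ) : Prop :=
  ∀ x z : ℤ, x ≤ z → w x * w (z + 1) ≤ w (x + 1) * w z

/-- The functional form of the normalized matching property of `Div(n)`: the average over a level
of a function that is monotone for divisibility does not decrease with the rank. -/
def NormMatch (n : ℕ) : Prop :=
  ∀ g : ℕ → ℝ, (∀ x y, x ∣ y → y ∣ n → g x ≤ g y) →
    ∀ i : ℤ, levCard n (i + 1) * levSum n g i ≤ levCard n i * levSum n g (i + 1)

/-! ### Sequences of real numbers -/

/-- Moving the two indices `s` steps towards each other, rather than one. -/
theorem LogConc.gen {w : ℤ → ℝ} (hw : LogConc w) (s : ℕ) :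
    ∀ x z : ℤ, x ≤ z → w x * w (z + s) ≤ w (x + s) * w z := by
  induction s with
  | zero => intro x z _; simp
  | succ s ih =>
    intro x z hxz
    rcases hxz.eq_or_lt with rfl | hlt
    · exact (mul_comm _ _).le
    · have h1 := hw x (z + s) (by omega)
      have h2 := ih (x + 1) z (by omega)
      push_cast
      rw [show z + ((s : ℤ) + 1) = z + s + 1 by ring, show x + ((s : ℤ) + 1) = x + 1 + s by ring]
      exact h1.trans h2

/-- The sum of `k + 1` consecutive terms, ending at `a`. -/
def winSum (w : ℤ → ℝ) (k : ℕ) (a : ℤ) : ℝ := ∑ j ∈ Finset.range (k + 1), w (a - j)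

theorem winSum_succ (w : ℤ → ℝ) (k : ℕ) (a : ℤ) :
    winSum w k (a + 1) = w (a + 1) + winSum w k a - w (a - k) := by
  unfold winSum
  rw [Finset.sum_range_succ', Finset.sum_range_succ (fun j : ℕ => w (a - j))]
  have : ∀ j : ℕ, a + 1 - ((j + 1 : ℕ) : ℤ) = a - j := by intro j; push_cast; ring
  simp only [this]
  simp
  ring

theorem LogConc.winSum {w : ℤ → ℝ} (hw : LogConc w) (k : ℕ) : LogConc (winSum w k) := by
  intro a b hab
  rw [winSum_succ, winSum_succ]
  have h1 : _root_.winSum w k a * w (b + 1) ≤ w (a + 1) * _root_.winSum w k b := by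
    unfold _root_.winSum
    rw [Finset.sum_mul, Finset.mul_sum]
    refine Finset.sum_le_sum fun j _ => ?_
    have := hw.gen (j + 1) (a - j) (b - j) (by omega)
    push_cast at this
    rwa [show b - (j : ℤ) + (j + 1) = b + 1 by ring,
      show a - (j : ℤ) + (j + 1) = a + 1 by ring] at this
  have h2 : w (a - k) * _root_.winSum w k b ≤ _root_.winSum w k a * w (b - k) := by
    unfold _root_.winSum
    rw [Finset.sum_mul, Finset.mul_sum]
    refine Finset.sum_le_sum fun j hj => ?_
    have hj : j ≤ k := by simpa [Nat.lt_succ_iff] using hj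
    have := hw.gen (k - j) (a - k) (b - k) (by omega)
    push_cast [Nat.cast_sub hj] at this
    rwa [show b - (k : ℤ) + (k - j) = b - j by ring,
      show a - (k : ℤ) + (k - j) = a - j by ring] at this
  linarith

/-- A monotone likelihood ratio gives stochastic domination: if `α` is concentrated more to the
left than `β`, its normalized partial sums are larger. -/
theorem partialSum_cross_le (α β : ℕ → ℝ)
    (h : ∀ c d, c ≤ d → α d * β c ≤ α c * β d) {m M : ℕ} (hm : m ≤ M) :
    (∑ c ∈ Finset.range M, α c) * ∑ c ∈ Finset.range m, β c ≤
      (∑ c ∈ Finset.range M, β c) * ∑ c ∈ Finset.range m, α c := by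
  have hα := Finset.sum_range_add_sum_Ico α hm
  have hβ := Finset.sum_range_add_sum_Ico β hm
  have key : (∑ d ∈ Finset.Ico m M, α d) * ∑ c ∈ Finset.range m, β c ≤
      (∑ d ∈ Finset.Ico m M, β d) * ∑ c ∈ Finset.range m, α c := by
    rw [Finset.sum_mul_sum, Finset.sum_mul_sum]
    refine Finset.sum_le_sum fun d hd => Finset.sum_le_sum fun c hc => ?_
    rw [Finset.mem_Ico] at hd
    rw [Finset.mem_range] at hc
    have := h c d (by omega)
    linarith
  rw [← hα, ← hβ]
  linarith

/-- Transport along a path. Mass `p` is moved onto mass `q` by steps `j → j` and `j → j + 1`; if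
the interlacing of the partial sums makes the required flows nonnegative and every step that may
carry mass leads from `x j` to a larger value of `y`, then the total `y` is larger. -/
theorem transport_le (p q x y : ℕ → ℝ) (k : ℕ)
    (hQP : ∀ m ≤ k + 1, ∑ c ∈ Finset.range m, q c ≤ ∑ c ∈ Finset.range m, p c)
    (hPQ : ∀ m ≤ k, ∑ c ∈ Finset.range m, p c ≤ ∑ c ∈ Finset.range (m + 1), q c)
    (htot : ∑ c ∈ Finset.range (k + 1), p c = ∑ c ∈ Finset.range (k + 1), q c)
    (hxy : ∀ m ≤ k, p m ≠ 0 → q m ≠ 0 → x m ≤ y m)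
    (hxy' : ∀ m < k, p m ≠ 0 → x m ≤ y (m + 1)) :
    ∑ c ∈ Finset.range (k + 1), p c * x c ≤ ∑ c ∈ Finset.range (k + 1), q c * y c := by
  have main : ∀ m ≤ k + 1, ∑ c ∈ Finset.range m, p c * x c ≤ ∑ c ∈ Finset.range m, q c * y c +
      (∑ c ∈ Finset.range m, p c - ∑ c ∈ Finset.range m, q c) * y m := by
    intro m
    induction m with
    | zero => intro _; simp
    | succ m ih =>
      intro hm
      have ih := ih (by omega)
      have a1 := hQP m (by omega)
      have a2 := hQP (m + 1) hm
      have a3 := hPQ m (by omega)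
      -- `v` is the flow along `m → m`, and `u` the flow along `m → m + 1`
      obtain ⟨v, hv⟩ : ∃ v, v = ∑ c ∈ Finset.range (m + 1), q c - ∑ c ∈ Finset.range m, p c :=
        ⟨_, rfl⟩
      obtain ⟨u, hu⟩ : ∃ u, u = ∑ c ∈ Finset.range (m + 1), p c -
        ∑ c ∈ Finset.range (m + 1), q c := ⟨_, rfl⟩
      have hu0 : 0 ≤ u := by linarith
      have hv0 : 0 ≤ v := by linarith
      have huv : p m = u + v := by rw [hu, hv, Finset.sum_range_succ p]; ring
      have hvq : v ≤ q m := by rw [hv, Finset.sum_range_succ]; linarith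
      have b1 : v * x m ≤ v * y m := by
        rcases hv0.eq_or_lt with h | h
        · simp [← h]
        · exact mul_le_mul_of_nonneg_left
            (hxy m (by omega) (by linarith) (by linarith)) hv0
      have b2 : u * x m ≤ u * y (m + 1) := by
        rcases hu0.eq_or_lt with h | h
        · simp [← h]
        · have hmk : m < k := by
            rcases (show m ≤ k by omega).eq_or_lt with rfl | h'
            · linarith
            · exact h'
          exact mul_le_mul_of_nonneg_left (hxy' m hmk (by linarith)) hu0
      rw [← hu]
      have e : q m * y m = v * y m +
          (∑ c ∈ Finset.range m, p c - ∑ c ∈ Finset.range m, q c) * y m := by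
        rw [hv, Finset.sum_range_succ]; ring
      rw [Finset.sum_range_succ, Finset.sum_range_succ (fun c => q c * y c), e, huv]
      linarith
  have := main (k + 1) le_rfl
  rwa [htot, sub_self, zero_mul, add_zero] at this

/-! ### Levels of the divisor lattice -/

theorem rk_mul {x y : ℕ} (hx : x ≠ 0) (hy : y ≠ 0) : rk (x * y) = rk x + rk y :=
  ArithmeticFunction.cardFactors_mul hx hy

theorem rk_prime_pow {p : ℕ} (hp : p.Prime) (j : ℕ) : rk (p ^ j) = j :=
  ArithmeticFunction.cardFactors_apply_prime_pow hp

theorem rk_le_of_dvd {x y : ℕ} (hy : y ≠ 0) (h : x ∣ y) : rk x ≤ rk y := by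
  obtain ⟨z, rfl⟩ := h
  rw [rk_mul (left_ne_zero_of_mul hy) (right_ne_zero_of_mul hy)]
  omega

theorem levCard_nonneg (n : ℕ) (a : ℤ) : 0 ≤ levCard n a := Nat.cast_nonneg _

theorem levSum_one (n : ℕ) (a : ℤ) : levSum n (fun _ => 1) a = levCard n a := by
  simp [levSum, levCard]

theorem levSum_eq_zero {n : ℕ} {a : ℤ} (h : levCard n a = 0) (g : ℕ → ℝ) : levSum n g a = 0 := by
  have : lev n a = ∅ := by simpa [levCard] using h
  simp [levSum, this]

theorem sum_divisors_primePow_mul {p m : ℕ} (hp : p.Prime) (hpm : ¬ p ∣ m) (k : ℕ) (f : ℕ → ℝ) :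
    ∑ d ∈ (p ^ k * m).divisors, f d =
      ∑ j ∈ Finset.range (k + 1), ∑ x ∈ m.divisors, f (p ^ j * x) := by
  have hco : (p ^ k).Coprime m := ((Nat.Prime.coprime_iff_not_dvd hp).2 hpm).pow_left k
  rw [← Nat.sum_divisors_prime_pow (f := fun q => ∑ x ∈ m.divisors, f (q * x)) hp,
    ← Finset.sum_product', Nat.divisors_mul, Finset.mul_def,
    Finset.sum_image hco.mul_injOn_divisors]

theorem levSum_primePow_mul {p m : ℕ} (hp : p.Prime) (hpm : ¬ p ∣ m) (k : ℕ) (g : ℕ → ℝ)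
    (a : ℤ) : levSum (p ^ k * m) g a =
      ∑ j ∈ Finset.range (k + 1), levSum m (fun x => g (p ^ j * x)) (a - j) := by
  simp only [levSum, lev, Finset.sum_filter]
  rw [sum_divisors_primePow_mul hp hpm]
  refine Finset.sum_congr rfl fun j _ => Finset.sum_congr rfl fun x hx => ?_
  have hx0 : x ≠ 0 := (Nat.pos_of_mem_divisors hx).ne'
  rw [rk_mul (pow_ne_zero _ hp.ne_zero) hx0, rk_prime_pow hp]
  refine if_congr ?_ rfl rfl
  push_cast
  omega

theorem levCard_primePow_mul {p m : ℕ} (hp : p.Prime) (hpm : ¬ p ∣ m) (k : ℕ) :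
    levCard (p ^ k * m) = winSum (levCard m) k := by
  funext a
  rw [← levSum_one, levSum_primePow_mul hp hpm]
  simp only [levSum_one]
  rfl

/-! ### Normalized matching for divisors -/

/-- Level `i` of `Div(p ^ k * m)` splits into the pieces `p ^ j * x` with `rk x = i - j`, `j ≤ k`.
Up to normalization, the mass of piece `j` is moved to pieces `j` and `j + 1` of level `i + 1`. -/
theorem normMatch_primePow_mul {p m : ℕ} (hp : p.Prime) (hpm : ¬ p ∣ m) (k : ℕ)
    (hlc : LogConc (levCard m)) (hnm : NormMatch m) : NormMatch (p ^ k * m) := by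
  intro g hg i
  rw [levCard_primePow_mul hp hpm, levSum_primePow_mul hp hpm, levSum_primePow_mul hp hpm]
  set w := levCard m with hw
  have hw0 : ∀ a, 0 ≤ w a := levCard_nonneg m
  have hS0 : ∀ a, 0 ≤ winSum w k a := fun a => Finset.sum_nonneg fun _ _ => hw0 _
  -- the average of `x ↦ g (p ^ j * x)` over level `a` of `Div(m)`
  let A : ℤ → ℕ → ℝ := fun a j => levSum m (fun x => g (p ^ j * x)) a / w a
  have hA : ∀ a j, levSum m (fun x => g (p ^ j * x)) a = w a * A a j := by
    intro a j
    by_cases h : w a = 0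
    · rw [h, zero_mul, levSum_eq_zero h]
    · exact (mul_div_cancel₀ _ h).symm
  simp only [hA, Finset.mul_sum, ← mul_assoc]
  apply transport_le (fun j => winSum w k (i + 1) * w (i - j))
    (fun j => winSum w k i * w (i + 1 - j)) (fun j => A (i - j) j) (fun j => A (i + 1 - j) j)
  -- nonnegativity of the flow `j → j + 1`, which is where log-concavity enters
  · intro r hr
    rw [← Finset.mul_sum, ← Finset.mul_sum]
    refine partialSum_cross_le (fun j => w (i - j)) (fun j => w (i + 1 - j)) ?_ hr
    intro c d hcd
    have := hlc (i - d) (i - c) (by omega)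
    rw [show i - (c : ℤ) + 1 = i + 1 - c by ring, show i - (d : ℤ) + 1 = i + 1 - d by ring] at this
    rw [mul_comm (w (i - c))]
    exact this
  -- nonnegativity of the flow `j → j`, which needs only that the level sizes are nonnegative
  · intro r hr
    rw [← Finset.mul_sum, ← Finset.mul_sum, winSum_succ, Finset.sum_range_succ']
    have e : ∀ j : ℕ, i + 1 - ((j + 1 : ℕ) : ℤ) = i - j := by intro j; push_cast; ring
    simp only [e, Nat.cast_zero, sub_zero]
    have h1 : ∑ c ∈ Finset.range r, w (i - c) ≤ winSum w k i :=
      Finset.sum_le_sum_of_subset_of_nonneg (by intro c; simp; omega) fun _ _ _ => hw0 _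
    have h2 : 0 ≤ ∑ c ∈ Finset.range r, w (i - c) := Finset.sum_nonneg fun _ _ => hw0 _
    nlinarith [mul_le_mul_of_nonneg_left h1 (hw0 (i + 1)), mul_nonneg (hw0 (i - k)) h2]
  · rw [← Finset.mul_sum, ← Finset.mul_sum]
    exact mul_comm _ _
  · intro j hj h1 h2
    have h1 := (hw0 (i - j)).lt_of_ne' (right_ne_zero_of_mul h1)
    have h2 := (hw0 (i + 1 - j)).lt_of_ne' (right_ne_zero_of_mul h2)
    have := hnm (fun x => g (p ^ j * x)) (fun x y hxy hy => hg _ _ (Nat.mul_dvd_mul_left _ hxy)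
      (Nat.mul_dvd_mul (pow_dvd_pow _ hj) hy)) (i - j)
    rw [show i - (j : ℤ) + 1 = i + 1 - j by ring] at this
    refine (div_le_div_iff₀ h1 h2).2 ?_
    rw [mul_comm, mul_comm _ (w _)]
    exact this
  · intro j hj _
    rw [show i + 1 - ((j + 1 : ℕ) : ℤ) = i - j by push_cast; ring]
    refine div_le_div_of_nonneg_right (Finset.sum_le_sum fun x hx => ?_) (hw0 _)
    have hx : x ∣ m := Nat.dvd_of_mem_divisors (Finset.mem_filter.1 hx).1
    exact hg _ _ (Nat.mul_dvd_mul_right (pow_dvd_pow _ (Nat.le_succ j)) _)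
      (Nat.mul_dvd_mul (pow_dvd_pow _ hj) hx)

theorem logConc_and_normMatch (n : ℕ) (hn : n ≠ 0) : LogConc (levCard n) ∧ NormMatch n := by
  induction n using Nat.recOnPrimePow with
  | zero => exact absurd rfl hn
  | one =>
    have h1 : ∀ a : ℤ, a ≠ 0 → levCard 1 a = 0 := by
      intro a ha
      simp [levCard, lev, rk, Finset.filter_singleton, ha.symm]
    constructor
    · intro x z hxz
      have hr := mul_nonneg (levCard_nonneg 1 (x + 1)) (levCard_nonneg 1 z)
      by_cases hx : x = 0
      · rw [h1 (z + 1) (by omega)]; simpa using hr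
      · rw [h1 x hx]; simpa using hr
    · intro g _ i
      by_cases hi : i = 0
      · have := h1 (i + 1) (by omega)
        rw [this, levSum_eq_zero this]; simp
      · have := h1 i hi
        rw [this, levSum_eq_zero this]; simp
  | prime_pow_mul m p k hp hpm _ ih =>
    have hm : m ≠ 0 := right_ne_zero_of_mul hn
    obtain ⟨h1, h2⟩ := ih hm
    refine ⟨?_, normMatch_primePow_mul hp hpm k h1 h2⟩
    rw [levCard_primePow_mul hp hpm]
    exact h1.winSum k

/-- Log-concavity without internal zeros, together with the nonempty levels `0` and `rk n`, makes
every level in between nonempty. -/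
theorem levCard_pos {n i : ℕ} (hn : n ≠ 0) (hi : i ≤ rk n) : 0 < levCard n i := by
  have hlc := (logConc_and_normMatch n hn).1
  have h0 : 0 < levCard n 0 := by
    refine Nat.cast_pos.2 (Finset.card_pos.2 ⟨1, ?_⟩)
    simp [lev, hn, rk]
  have hN : 0 < levCard n (rk n) := by
    refine Nat.cast_pos.2 (Finset.card_pos.2 ⟨n, ?_⟩)
    simp [lev, hn]
  have := hlc.gen i 0 (rk n - i) (by omega)
  rw [sub_add_cancel, zero_add] at this
  refine (levCard_nonneg n i).lt_of_ne' fun h => ?_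
  rw [h, zero_mul] at this
  exact absurd this (not_le.2 (mul_pos h0 hN))

/-! ### Chain heights and the telescoping sum -/

open Classical in
/-- The largest size of a chain (for divisibility) contained in `B`. -/
noncomputable def chainHeight (B : Finset ℕ) : ℕ :=
  (B.powerset.filter (fun c : Finset ℕ => IsChain (· ∣ ·) (c : Set ℕ))).sup Finset.card

theorem card_le_chainHeight {B c : Finset ℕ} (hc : c ⊆ B) (h : IsChain (· ∣ ·) (c : Set ℕ)) :
    c.card ≤ chainHeight B := by
  classical
  unfold chainHeight
  refine Finset.le_sup (f := Finset.card) ?_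
  simpa using ⟨hc, h⟩

theorem exists_chain (B : Finset ℕ) :
    ∃ c ⊆ B, IsChain (· ∣ ·) (c : Set ℕ) ∧ c.card = chainHeight B := by
  classical
  have hne : (B.powerset.filter (fun c : Finset ℕ => IsChain (· ∣ ·) (c : Set ℕ))).Nonempty :=
    ⟨∅, by simp⟩
  obtain ⟨c, hc, he⟩ := Finset.exists_mem_eq_sup _ hne Finset.card
  rw [Finset.mem_filter, Finset.mem_powerset] at hc
  exact ⟨c, hc.1, hc.2, by rw [chainHeight, he]⟩

theorem chainHeight_mono {B C : Finset ℕ} (h : B ⊆ C) : chainHeight B ≤ chainHeight C := by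
  obtain ⟨c, hc, hch, he⟩ := exists_chain B
  rw [← he]
  exact card_le_chainHeight (hc.trans h) hch

/-- Listing a chain of positive integers in increasing order lists it in the order of
divisibility. -/
theorem chainHeight_le {t : ℕ} {B : Finset ℕ} (h0 : ∀ x ∈ B, 0 < x)
    (hB : DvdChainFree t (B : Set ℕ)) : chainHeight B ≤ t := by
  by_contra! hlt
  obtain ⟨c, hc, hch, he⟩ := exists_chain B
  obtain ⟨d, hd, hdc⟩ := Finset.exists_subset_card_eq (show t + 1 ≤ c.card by omega)
  refine hB ⟨d.orderEmbOfFin hdc, fun i => hc (hd (d.orderEmbOfFin_mem hdc i)), ?_⟩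
  intro i j hij
  have hlt : d.orderEmbOfFin hdc i < d.orderEmbOfFin hdc j :=
    (d.orderEmbOfFin hdc).strictMono hij
  have hi := hd (d.orderEmbOfFin_mem hdc i)
  have hj := hd (d.orderEmbOfFin_mem hdc j)
  refine ⟨?_, hlt.ne⟩
  rcases hch hi hj hlt.ne with h | h
  · exact h
  · exact absurd (Nat.le_of_dvd (h0 _ (hc hi)) h) (not_le.2 hlt)

/-- Adjoining `x` to a chain of proper divisors of `x` lengthens it by one. -/
theorem chainHeight_proper_add_one_le {B : Finset ℕ} {x : ℕ} (hx : x ∈ B) :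
    chainHeight (B.filter (fun y => y ∣ x ∧ y ≠ x)) + 1 ≤
      chainHeight (B.filter (fun y => y ∣ x)) := by
  obtain ⟨c, hc, hch, he⟩ := exists_chain (B.filter (fun y => y ∣ x ∧ y ≠ x))
  have hc' : ∀ y ∈ c, y ∈ B ∧ y ∣ x ∧ y ≠ x := fun y hy => Finset.mem_filter.1 (hc hy)
  have hxc : x ∉ c := fun h => (hc' x h).2.2 rfl
  rw [← he, ← Finset.card_insert_of_notMem hxc]
  apply card_le_chainHeight
  · intro y hy
    rcases Finset.mem_insert.1 hy with rfl | hy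
    · simp [hx]
    · simp [hc' y hy]
  · rw [Finset.coe_insert]
    exact hch.insert fun y hy _ => Or.inr (hc' y hy).2.1

/-- If `h x ≤ h' y` whenever `x` properly divides `y`, then the average of `h` over a level is at
most the average of `h'` over the next level. -/
theorem levSum_div_le {n : ℕ} (hn : n ≠ 0) (h h' : ℕ → ℝ) (hle : ∀ x, h' x ≤ h x)
    (hlt : ∀ x y, x ∣ y → x ≠ y → h x ≤ h' y) {i : ℕ} (hi : i + 1 ≤ rk n) :
    levSum n h i / levCard n i ≤ levSum n h' (i + 1 : ℕ) / levCard n (i + 1 : ℕ) := by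
  have key := (logConc_and_normMatch n hn).2 (fun x => if rk x ≤ i then h x else h' x) (by
    intro x y hxy _
    rcases eq_or_ne x y with rfl | hne
    · exact le_rfl
    have h1 := hlt x y hxy hne
    have h2 := hle x
    have h3 := hle y
    split_ifs <;> linarith) i
  have e1 : levSum n (fun x => if rk x ≤ i then h x else h' x) i = levSum n h i := by
    refine Finset.sum_congr rfl fun x hx => if_pos ?_
    have := (Finset.mem_filter.1 hx).2
    omega
  have e2 : levSum n (fun x => if rk x ≤ i then h x else h' x) (i + 1) =
      levSum n h' (i + 1) := by
    refine Finset.sum_congr rfl fun x hx => if_neg ?_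
    have := (Finset.mem_filter.1 hx).2
    omega
  rw [e1, e2] at key
  rw [div_le_div_iff₀ (levCard_pos hn (by omega)) (levCard_pos hn hi)]
  push_cast
  linarith

theorem W_eq_levCard (n i : ℕ) : (W n i : ℝ) = levCard n i := by
  simp [W, levCard, lev]

theorem sum_div_W_eq (n : ℕ) (hn : n ≠ 0) (f : ℕ → ℝ) :
    ∑ x ∈ n.divisors, f x / W n (rk x) =
      ∑ i ∈ Finset.range (rk n + 1), levSum n f i / levCard n i := by
  rw [← Finset.sum_fiberwise_of_maps_to (g := rk) (t := Finset.range (rk n + 1))]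
  · refine Finset.sum_congr rfl fun i _ => ?_
    rw [levSum, Finset.sum_div, lev]
    simp only [Nat.cast_inj]
    refine Finset.sum_congr rfl fun x hx => ?_
    rw [(Finset.mem_filter.1 hx).2, W_eq_levCard]
  · intro x hx
    exact Finset.mem_range_succ_iff.2 (rk_le_of_dvd hn (Nat.dvd_of_mem_divisors hx))

/-- **Lemma (arithmetic LYM inequality for `t`-chain free families).**
For any `t`-chain free family `𝒜` of divisors of `n`,
`∑_{x ∈ 𝒜} 1 / W_{rk x}(n) ≤ t`. -/
theorem lym_divisors_chainfree (n t : ℕ) (hn : 0 < n) (ht : 0 < t)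
    (𝒜 : Finset ℕ) (h𝒜 : 𝒜 ⊆ n.divisors)
    (hchain : DvdChainFree t (↑𝒜 : Set ℕ)) :
    ∑ x ∈ 𝒜, (1 : ℝ) / (W n (rk x) : ℝ) ≤ (t : ℝ) := by
  have hn' : n ≠ 0 := hn.ne'
  let h : ℕ → ℝ := fun x => chainHeight (𝒜.filter (fun y => y ∣ x))
  let h' : ℕ → ℝ := fun x => chainHeight (𝒜.filter (fun y => y ∣ x ∧ y ≠ x))
  have hle : ∀ x, h' x ≤ h x := fun x => Nat.cast_le.2 <| chainHeight_mono fun y hy => by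
    simp only [Finset.mem_filter] at hy ⊢
    exact ⟨hy.1, hy.2.1⟩
  have hlt : ∀ x y, x ∣ y → x ≠ y → h x ≤ h' y := fun x y hxy hne =>
    Nat.cast_le.2 <| chainHeight_mono fun z hz => by
      simp only [Finset.mem_filter] at hz ⊢
      refine ⟨hz.1, hz.2.trans hxy, ?_⟩
      rintro rfl
      exact hne (Nat.dvd_antisymm hxy hz.2)
  have hone : ∀ x ∈ 𝒜, 1 ≤ h x - h' x := fun x hx => by
    have : h' x + 1 ≤ h x := by
      simpa [h, h'] using (Nat.cast_le (α := ℝ)).2 (chainHeight_proper_add_one_le hx)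
    linarith
  have ht' : ∀ x, h x ≤ t := fun x => Nat.cast_le.2 <|
    (chainHeight_mono (Finset.filter_subset _ _)).trans <|
      chainHeight_le (fun x hx => Nat.pos_of_mem_divisors (h𝒜 hx)) hchain
  have h0' : ∀ x, 0 ≤ h' x := fun x => Nat.cast_nonneg _
  have tele : ∀ r ≤ rk n, ∑ i ∈ Finset.range (r + 1),
      (levSum n h i / levCard n i - levSum n h' i / levCard n i) ≤
        levSum n h r / levCard n r := by
    intro r
    induction r with
    | zero =>
      intro _
      have : 0 ≤ levSum n h' (0 : ℕ) / levCard n (0 : ℕ) :=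
        div_nonneg (Finset.sum_nonneg fun x _ => h0' x) (levCard_nonneg _ _)
      rw [Finset.sum_range_one]
      linarith
    | succ r ih =>
      intro hr
      rw [Finset.sum_range_succ]
      have := ih (by omega)
      have := levSum_div_le hn' h h' hle hlt hr
      linarith
  calc ∑ x ∈ 𝒜, (1 : ℝ) / (W n (rk x) : ℝ)
      ≤ ∑ x ∈ 𝒜, (h x - h' x) / W n (rk x) :=
        Finset.sum_le_sum fun x hx => div_le_div_of_nonneg_right (hone x hx) (Nat.cast_nonneg _)
    _ ≤ ∑ x ∈ n.divisors, (h x - h' x) / W n (rk x) :=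
        Finset.sum_le_sum_of_subset_of_nonneg h𝒜 fun x _ _ =>
          div_nonneg (sub_nonneg.2 (hle x)) (Nat.cast_nonneg _)
    _ = ∑ i ∈ Finset.range (rk n + 1),
          (levSum n h i / levCard n i - levSum n h' i / levCard n i) := by
        simp only [sub_div, Finset.sum_sub_distrib, sum_div_W_eq n hn']
    _ ≤ levSum n h (rk n) / levCard n (rk n) := tele (rk n) le_rfl
    _ ≤ t := by
        rw [div_le_iff₀ (levCard_pos hn' le_rfl)]
        refine (Finset.sum_le_sum fun x _ => ht' x).trans ?_
        rw [Finset.sum_const, nsmul_eq_mul, mul_comm]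
        rfl
end
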